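/- Let n ≥ 5 and δ = 1/10. There is a constant C (depending only on n and η, and independent of ε and x) such that for every ε > 0, every x ∈ ℝ^{n-1}, and every t ∈ ℝ, the kernel K₀^ε(x,t) = ∫_{−δ}^{δ} ((σ_s^{(0)})^∨(x,t) − (σ_0^{(0)})^∨(x,t))/(s²+ε²) ds satisfies |K₀^ε(x,t)| ≤ C(1+|t|)^{(2−n)/2 + 1}. -/

import Mathlib

open MeasureTheory Real FourierTransform Filter
open scoped ENNReal RealInnerProductSpace

noncomputable section

/-- `ℝⁿ = ℝ^{n-1} × ℝ`, realized as `EuclideanSpace ℝ (Fin (m+1))` with `m = n-1`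
spatial coordinates and the last coordinate playing the role of time. -/
abbrev Spacetime (m : ℕ) := EuclideanSpace ℝ (Fin (m + 1))

namespace Wave

variable {m : ℕ}

/-- The time coordinate `τ` of a point `z = (ξ, τ)`. -/
def timeCoord (z : Spacetime m) : ℝ := z (Fin.last m)

/-- `g(ξ,τ) = |ξ|² - τ²`, written using `|ξ|² = ‖z‖² - τ²`. -/
def waveSymbol (z : Spacetime m) : ℝ := ‖z‖ ^ 2 - 2 * timeCoord z ^ 2

/-- The canonical surface measure `σ_s` on the level set `g⁻¹(s)` of
`g(ξ,τ) = |ξ|² - τ²`: the `(n-1)`-dimensional Hausdorff measure restricted to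
`g⁻¹(s)` (with the origin deleted). -/
def levelMeasure (m : ℕ) (s : ℝ) : Measure (Spacetime m) :=
  (μH[(m : ℝ)]).restrict {z | waveSymbol z = s ∧ z ≠ 0}

/-- `(σ_s^{(0)})^∨(w)`: the inverse Fourier transform of the truncated surface measure
`σ_s^{(0)} = η σ_s`, evaluated at `w = (x,t)`. -/
def sigmaCheck (η : Spacetime m → ℝ) (s : ℝ) (w : Spacetime m) : ℂ :=
  ∫ z, (η z : ℂ) * Complex.exp (2 * (π : ℂ) * Complex.I * ((⟪z, w⟫ : ℝ) : ℂ))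
    ∂(levelMeasure m s)

/-- The kernel `K₀^ε(x,t) = ∫_{-δ}^{δ} ((σ_s^{(0)})^∨(x,t) - (σ_0^{(0)})^∨(x,t))/(s²+ε²) ds`
with `δ = 1/10`. -/
def Kzero (η : Spacetime m → ℝ) (ε : ℝ) (w : Spacetime m) : ℂ :=
  ∫ s in (-(1 / 10 : ℝ))..(1 / 10 : ℝ),
    (sigmaCheck η s w - sigmaCheck η 0 w) / (((s ^ 2 + ε ^ 2 : ℝ)) : ℂ)

/-- The point `(x, t) ∈ ℝ^{n-1} × ℝ` as an element of spacetime. -/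
def embed (x : EuclideanSpace ℝ (Fin m)) (t : ℝ) : Spacetime m :=
  (EuclideanSpace.equiv (Fin (m + 1)) ℝ).symm (Fin.snoc ((EuclideanSpace.equiv (Fin m) ℝ) x) t)

/-- The partial-convolution operator `T_t^{(ε)} g (x) = ∫ K₀^ε(x-y, t) g(y) dy` acting in
the spatial variables only. -/
def Top (η : Spacetime m → ℝ) (ε t : ℝ) (g : EuclideanSpace ℝ (Fin m) → ℂ)
    (x : EuclideanSpace ℝ (Fin m)) : ℂ :=
  ∫ y, Kzero η ε (embed (x - y) t) * g y

end Wave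

open Wave

section

open scoped Topology NNReal

namespace MeasureTheory

/-- A local comparison of two measures on an open set is global. -/
theorem measure_le_of_locally_le {X : Type*} [TopologicalSpace X] [SecondCountableTopology X]
    [MeasurableSpace X] [OpensMeasurableSpace X] {μ ν : Measure X} {U : Set X}
    (h : ∀ x ∈ U, ∃ N ∈ 𝓝 x, ∀ A ⊆ N, MeasurableSet A → A ⊆ U → μ A ≤ ν A)
    {A : Set X} (hA : MeasurableSet A) (hAU : A ⊆ U) : μ A ≤ ν A := by
  choose! N hN hNle using h
  obtain ⟨t, htU, htc, hcov⟩ := TopologicalSpace.countable_cover_nhdsWithin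
    (s := U) (f := fun x => interior (N x))
    (fun x hx => mem_nhdsWithin_of_mem_nhds (interior_mem_nhds.2 (hN x hx)))
  rcases t.eq_empty_or_nonempty with rfl | hne
  · have : A = ∅ := by
      apply Set.eq_empty_of_subset_empty
      simpa using hAU.trans hcov
    simp [this]
  obtain ⟨u, rfl⟩ := htc.exists_eq_range hne
  set D : ℕ → Set X := disjointed fun n => interior (N (u n))
  have hDm : ∀ n, MeasurableSet (D n) :=
    fun n => MeasurableSet.disjointed (fun n => isOpen_interior.measurableSet) n
  have hAeq : A = ⋃ n, A ∩ D n := by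
    rw [← Set.inter_iUnion, iUnion_disjointed]
    refine (Set.inter_eq_left.2 (hAU.trans (hcov.trans ?_))).symm
    simp
  have hdisj : Pairwise (Function.onFun Disjoint fun n => A ∩ D n) := fun i j hij =>
    (disjoint_disjointed _ hij).mono Set.inter_subset_right Set.inter_subset_right
  rw [hAeq, measure_iUnion hdisj fun n => hA.inter (hDm n),
    measure_iUnion hdisj fun n => hA.inter (hDm n)]
  refine ENNReal.tsum_le_tsum fun n => hNle (u n) (htU ⟨n, rfl⟩) _ ?_ (hA.inter (hDm n)) ?_
  · exact Set.inter_subset_right.trans ((disjointed_subset _ n).trans interior_subset)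
  · exact Set.inter_subset_left.trans hAU

/-- If two measures are locally within any factor `K > 1` of each other, they agree. -/
theorem measure_eq_of_locally_le_mul {X : Type*} [TopologicalSpace X] [SecondCountableTopology X]
    [MeasurableSpace X] [OpensMeasurableSpace X] {μ ν : Measure X} {U : Set X} (k : ℕ)
    (h : ∀ K : ℝ≥0, 1 < K → ∀ x ∈ U, ∃ N ∈ 𝓝 x, ∀ A ⊆ N, MeasurableSet A → A ⊆ U →
      μ A ≤ (K : ℝ≥0∞) ^ k * ν A ∧ ν A ≤ (K : ℝ≥0∞) ^ k * μ A)
    {A : Set X} (hA : MeasurableSet A) (hAU : A ⊆ U) : μ A = ν A := by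
  have hlim : ∀ c : ℝ≥0∞, ∀ d : ℝ≥0∞, (∀ K : ℝ≥0, 1 < K → d ≤ (K : ℝ≥0∞) ^ k * c) → d ≤ c := by
    intro c d hd
    have ht : Tendsto (fun K : ℝ≥0 => (K : ℝ≥0∞) ^ k * c) (𝓝[>] 1) (𝓝 (1 * c)) := by
      refine ENNReal.Tendsto.mul_const ?_ (Or.inl one_ne_zero)
      have : ContinuousAt (fun K : ℝ≥0 => (K : ℝ≥0∞) ^ k) 1 :=
        ((ENNReal.continuous_pow k).comp ENNReal.continuous_coe).continuousAt
      simpa [ContinuousAt] using this.tendsto.mono_left nhdsWithin_le_nhds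
    rw [one_mul] at ht
    exact ge_of_tendsto ht (eventually_mem_nhdsWithin.mono fun K hK => hd K hK)
  refine le_antisymm (hlim _ _ fun K hK => ?_) (hlim _ _ fun K hK => ?_)
  · have := measure_le_of_locally_le (μ := μ) (ν := (K : ℝ≥0∞) ^ k • ν) (U := U) (fun x hx => by
      obtain ⟨N, hN, hle⟩ := h K hK x hx
      exact ⟨N, hN, fun A hA hAm hAU => by simpa using (hle A hA hAm hAU).1⟩) hA hAU
    simpa using this
  · have := measure_le_of_locally_le (μ := ν) (ν := (K : ℝ≥0∞) ^ k • μ) (U := U) (fun x hx => by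
      obtain ⟨N, hN, hle⟩ := h K hK x hx
      exact ⟨N, hN, fun A hA hAm hAU => by simpa using (hle A hA hAm hAU).2⟩) hA hAU
    simpa using this

end MeasureTheory

end

section

open scoped Topology NNReal

namespace MeasureTheory

variable {E F : Type*} [NormedAddCommGroup E] [NormedSpace ℝ E] [FiniteDimensional ℝ E]
  [MeasurableSpace E] [BorelSpace E] [NormedAddCommGroup F] [NormedSpace ℝ F]
  [MeasurableSpace F] [BorelSpace F]

open Module

/-- Near a point where `Φ` has an injective strict derivative, `Φ` distorts Hausdorff measure by
a factor arbitrarily close to that of any linear automorphism inducing the same norm. -/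
theorem hausdorffMeasure_image_near {Φ : E → F} {P : F → E} {x : E} {T : E →L[ℝ] F}
    {L : E ≃L[ℝ] E} (hP : ∀ y, P (Φ y) = y) (hΦ : HasStrictFDerivAt Φ T x)
    (hTL : ∀ v, ‖T v‖ = ‖L v‖) {K : ℝ≥0} (hK : 1 < K) :
    ∃ N ∈ 𝓝 x, ∀ A ⊆ N,
      μH[finrank ℝ E] (Φ '' A) ≤ (K : ℝ≥0∞) ^ finrank ℝ E *
        (ENNReal.ofReal |LinearMap.det (L : E →ₗ[ℝ] E)| * μH[finrank ℝ E] A) ∧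
      ENNReal.ofReal |LinearMap.det (L : E →ₗ[ℝ] E)| * μH[finrank ℝ E] A ≤
        (K : ℝ≥0∞) ^ finrank ℝ E * μH[finrank ℝ E] (Φ '' A) := by
  have hK' : (1 : ℝ) < K := by exact_mod_cast hK
  set M : ℝ := ‖(L.symm : E →L[ℝ] E)‖ + 1
  have hM : 0 < M := by positivity
  have hLM : ∀ v, ‖v‖ ≤ M * ‖L v‖ := fun v => by
    calc ‖v‖ = ‖(L.symm : E →L[ℝ] E) (L v)‖ := by simp
      _ ≤ ‖(L.symm : E →L[ℝ] E)‖ * ‖L v‖ := ContinuousLinearMap.le_opNorm _ _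
      _ ≤ M * ‖L v‖ := by gcongr; simp [M]
  set e : ℝ := 1 - (K : ℝ)⁻¹
  have he : 0 < e := sub_pos.2 (inv_lt_one_of_one_lt₀ hK')
  have hev := hΦ.isLittleO.def (c := e / M) (by positivity)
  rw [nhds_prod_eq] at hev
  obtain ⟨N, hN, hNe⟩ := Filter.eventually_prod_self_iff'.1 hev
  have key : ∀ y ∈ N, ∀ z ∈ N, ‖Φ y - Φ z - T (y - z)‖ ≤ e * ‖L (y - z)‖ := by
    intro y hy z hz
    calc ‖Φ y - Φ z - T (y - z)‖ ≤ e / M * ‖y - z‖ := hNe y hy z hz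
      _ ≤ e / M * (M * ‖L (y - z)‖) := by gcongr; exact hLM _
      _ = e * ‖L (y - z)‖ := by field_simp
  have hup : ∀ y ∈ N, ∀ z ∈ N, ‖Φ y - Φ z‖ ≤ K * ‖L (y - z)‖ := by
    intro y hy z hz
    have h1 := key y hy z hz
    have h2 : ‖Φ y - Φ z‖ ≤ ‖T (y - z)‖ + ‖Φ y - Φ z - T (y - z)‖ := norm_le_norm_add_norm_sub' _ _
    rw [hTL] at h2
    have h3 : 1 + e ≤ K := by
      have : (K : ℝ)⁻¹ * K = 1 := inv_mul_cancel₀ (by positivity)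
      have h4 : 0 < (K : ℝ)⁻¹ := by positivity
      simp only [e]
      nlinarith [mul_pos h4 (by positivity : (0 : ℝ) < K), mul_nonneg h4.le (sq_nonneg ((K : ℝ) - 1))]
    nlinarith [norm_nonneg (L (y - z))]
  have hlow : ∀ y ∈ N, ∀ z ∈ N, ‖L (y - z)‖ ≤ K * ‖Φ y - Φ z‖ := by
    intro y hy z hz
    have h1 := key y hy z hz
    have h2 : ‖T (y - z)‖ ≤ ‖Φ y - Φ z‖ + ‖Φ y - Φ z - T (y - z)‖ := by
      have := norm_sub_norm_le (T (y - z)) (Φ y - Φ z)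
      rw [norm_sub_rev (T (y - z))] at this
      linarith
    rw [hTL] at h2
    have h3 : (K : ℝ)⁻¹ * ‖L (y - z)‖ ≤ ‖Φ y - Φ z‖ := by simp only [e] at h1; nlinarith
    rwa [inv_mul_le_iff₀ (by positivity)] at h3
  refine ⟨N, hN, fun A hA => ?_⟩
  have hdet : μH[finrank ℝ E] (L '' A) =
      ENNReal.ofReal |LinearMap.det (L : E →ₗ[ℝ] E)| * μH[finrank ℝ E] A :=
    Measure.addHaar_image_continuousLinearEquiv _ L A
  rw [← hdet]
  constructor
  · have himg : Φ '' A = (Φ ∘ L.symm) '' (L '' A) := by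
      rw [← Set.image_comp]
      congr 1
      ext y; simp
    have hlip : LipschitzOnWith K (Φ ∘ L.symm) (L '' A) := by
      refine LipschitzOnWith.of_dist_le_mul ?_
      rintro _ ⟨y, hy, rfl⟩ _ ⟨z, hz, rfl⟩
      simpa [dist_eq_norm] using hup y (hA hy) z (hA hz)
    rw [himg]
    simpa using hlip.hausdorffMeasure_image_le (d := (finrank ℝ E : ℝ)) (by positivity)
  · have himg : L '' A = (L ∘ P) '' (Φ '' A) := by
      rw [← Set.image_comp]
      congr 1
      ext y; simp [hP]
    have hlip : LipschitzOnWith K (L ∘ P) (Φ '' A) := by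
      refine LipschitzOnWith.of_dist_le_mul ?_
      rintro _ ⟨y, hy, rfl⟩ _ ⟨z, hz, rfl⟩
      simpa [dist_eq_norm, hP] using hlow y (hA hy) z (hA hz)
    rw [himg]
    simpa using hlip.hausdorffMeasure_image_le (d := (finrank ℝ E : ℝ)) (by positivity)

/-- Area formula for a map with a measurable left inverse: the Hausdorff measure on the image,
pulled back to the domain, has the Jacobian as its density. -/
theorem map_hausdorffMeasure_restrict_image {Φ : E → F} {P : F → E} {U : Set E} {J : E → ℝ}
    (hU : IsOpen U) (hP : ∀ y, P (Φ y) = y) (hPm : Measurable P)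
    (hJ : ∀ x ∈ U, ContinuousAt J x)
    (hΦ : ∀ x ∈ U, ∃ (T : E →L[ℝ] F) (L : E ≃L[ℝ] E), HasStrictFDerivAt Φ T x ∧
      (∀ v, ‖T v‖ = ‖L v‖) ∧ |LinearMap.det (L : E →ₗ[ℝ] E)| = J x) :
    (μH[finrank ℝ E].restrict (Φ '' U)).map P =
      (μH[finrank ℝ E].restrict U).withDensity fun x => ENNReal.ofReal (J x) := by
  set ν : Measure E := (μH[finrank ℝ E].restrict (Φ '' U)).map P
  set κ : Measure E := μH[finrank ℝ E]
  have hν : ∀ A ⊆ U, MeasurableSet A → ν A = μH[finrank ℝ E] (Φ '' A) := by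
    intro A hAU hA
    rw [Measure.map_apply hPm hA, Measure.restrict_apply (hPm hA)]
    congr 1
    ext z
    constructor
    · rintro ⟨h1, y, hy, rfl⟩
      exact ⟨y, by simpa [hP] using h1, rfl⟩
    · rintro ⟨y, hy, rfl⟩
      exact ⟨by simpa [hP] using hy, y, hAU hy, rfl⟩
  have hloc : ∀ A, MeasurableSet A → A ⊆ U →
      ν A = κ.withDensity (fun x => ENNReal.ofReal (J x)) A := by
    intro A hA hAU
    refine measure_eq_of_locally_le_mul (finrank ℝ E + 1) (U := U) (fun K hK x hx => ?_) hA hAU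
    obtain ⟨T, L, hT, hTL, hdet⟩ := hΦ x hx
    obtain ⟨N, hN, hNle⟩ := hausdorffMeasure_image_near hP hT hTL hK
    have hK' : (1 : ℝ) < K := by exact_mod_cast hK
    have hJ0 : 0 < J x := by
      rw [← hdet, abs_pos]
      exact (LinearEquiv.isUnit_det' L.toLinearEquiv).ne_zero
    have h1 : ∀ᶠ y in 𝓝 x, J y < K * J x :=
      (hJ x hx).eventually_lt_const (by nlinarith)
    have h2 : ∀ᶠ y in 𝓝 x, J x < K * J y := by
      have : ContinuousAt (fun y => K * J y) x := continuousAt_const.mul (hJ x hx)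
      exact this.eventually_const_lt (by nlinarith)
    refine ⟨N ∩ {y | J y < K * J x ∧ J x < K * J y}, inter_mem hN (h1.and h2),
      fun B hB hBm hBU => ?_⟩
    obtain ⟨hle1, hle2⟩ := hNle B (hB.trans Set.inter_subset_left)
    rw [hdet] at hle1 hle2
    rw [hν B hBU hBm, withDensity_apply _ hBm]
    have h3 : ∫⁻ y in B, ENNReal.ofReal (J y) ∂κ ≤ K * (ENNReal.ofReal (J x) * κ B) := by
      calc ∫⁻ y in B, ENNReal.ofReal (J y) ∂κ ≤ ∫⁻ y in B, K * ENNReal.ofReal (J x) ∂κ := by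
            refine setLIntegral_mono' hBm fun y hy => ?_
            rw [← ENNReal.ofReal_coe_nnreal, ← ENNReal.ofReal_mul (by positivity)]
            exact ENNReal.ofReal_le_ofReal (hB hy).2.1.le
        _ = K * (ENNReal.ofReal (J x) * κ B) := by rw [setLIntegral_const, mul_assoc]
    have h4 : ENNReal.ofReal (J x) * κ B ≤ K * ∫⁻ y in B, ENNReal.ofReal (J y) ∂κ := by
      rw [← lintegral_const_mul' _ _ ENNReal.coe_ne_top, ← setLIntegral_const]
      refine setLIntegral_mono' hBm fun y hy => ?_
      rw [← ENNReal.ofReal_coe_nnreal, ← ENNReal.ofReal_mul (by positivity)]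
      exact ENNReal.ofReal_le_ofReal (hB hy).2.2.le
    constructor
    · calc _ ≤ _ := hle1
        _ ≤ (K : ℝ≥0∞) ^ finrank ℝ E * (K * ∫⁻ y in B, ENNReal.ofReal (J y) ∂κ) := by gcongr
        _ = _ := by ring
    · calc _ ≤ _ := h3
        _ ≤ K * ((K : ℝ≥0∞) ^ finrank ℝ E * μH[finrank ℝ E] (Φ '' B)) := by gcongr
        _ = _ := by ring
  rw [← restrict_withDensity hU.measurableSet]
  ext A hA
  rw [Measure.restrict_apply hA, ← hloc _ (hA.inter hU.measurableSet) Set.inter_subset_right,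
    hν _ Set.inter_subset_right (hA.inter hU.measurableSet), Measure.map_apply hPm hA,
    Measure.restrict_apply (hPm hA)]
  congr 1
  ext z
  constructor
  · rintro ⟨h1, y, hy, rfl⟩
    exact ⟨y, ⟨by simpa [hP] using h1, hy⟩, rfl⟩
  · rintro ⟨y, ⟨hy, hyU⟩, rfl⟩
    exact ⟨by simpa [hP] using hy, y, hyU, rfl⟩

end MeasureTheory

end

section

open scoped Topology NNReal

namespace Wave

variable {m : ℕ}

/-- The spatial part `ξ` of a point `z = (ξ, τ)`. -/
def space (z : Spacetime m) : EuclideanSpace ℝ (Fin m) :=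
  WithLp.toLp 2 fun i => z i.castSucc

@[simp] theorem embed_castSucc (ξ : EuclideanSpace ℝ (Fin m)) (t : ℝ) (i : Fin m) :
    embed ξ t i.castSucc = ξ i := by
  simp [embed]

@[simp] theorem embed_last (ξ : EuclideanSpace ℝ (Fin m)) (t : ℝ) :
    embed ξ t (Fin.last m) = t := by
  simp [embed]

@[simp] theorem timeCoord_embed (ξ : EuclideanSpace ℝ (Fin m)) (t : ℝ) :
    timeCoord (embed ξ t) = t := embed_last ξ t

@[simp] theorem space_embed (ξ : EuclideanSpace ℝ (Fin m)) (t : ℝ) : space (embed ξ t) = ξ := by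
  ext i; simp [space]

@[simp] theorem embed_space (z : Spacetime m) : embed (space z) (timeCoord z) = z := by
  ext i
  induction i using Fin.lastCases with
  | last => simp [timeCoord]
  | cast i => simp [space]

theorem measurable_space : Measurable (space : Spacetime m → _) := by
  unfold space
  fun_prop

theorem inner_embed (ξ : EuclideanSpace ℝ (Fin m)) (t : ℝ) (w : Spacetime m) :
    ⟪embed ξ t, w⟫ = ⟪ξ, space w⟫ + t * timeCoord w := by
  simp [PiLp.inner_apply, Fin.sum_univ_castSucc, space, timeCoord, mul_comm]

theorem norm_sq_embed (ξ : EuclideanSpace ℝ (Fin m)) (t : ℝ) :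
    ‖embed ξ t‖ ^ 2 = ‖ξ‖ ^ 2 + t ^ 2 := by
  simp [EuclideanSpace.norm_sq_eq, Fin.sum_univ_castSucc]

theorem waveSymbol_embed (ξ : EuclideanSpace ℝ (Fin m)) (t : ℝ) :
    waveSymbol (embed ξ t) = ‖ξ‖ ^ 2 - t ^ 2 := by
  rw [waveSymbol, norm_sq_embed, timeCoord_embed]; ring

/-- `embed` as a continuous linear map. -/
def embedCLM (m : ℕ) : (EuclideanSpace ℝ (Fin m) × ℝ) →L[ℝ] Spacetime m :=
  LinearMap.toContinuousLinearMap
    { toFun := fun p => embed p.1 p.2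
      map_add' := fun p q => by
        ext i
        induction i using Fin.lastCases <;> simp
      map_smul' := fun c p => by
        ext i
        induction i using Fin.lastCases <;> simp }

@[simp] theorem embedCLM_apply (p : EuclideanSpace ℝ (Fin m) × ℝ) :
    embedCLM m p = embed p.1 p.2 := rfl

/-- A rank-one perturbation of the identity inducing the norm `√(|v|² + c² ⟪a, v⟫²)`. -/
theorem exists_equiv_norm_sq_add_inner_sq {E : Type*} [NormedAddCommGroup E]
    [InnerProductSpace ℝ E] [FiniteDimensional ℝ E] (a : E) (c : ℝ) :
    ∃ L : E ≃L[ℝ] E, (∀ v, ‖L v‖ ^ 2 = ‖v‖ ^ 2 + (c * ⟪a, v⟫) ^ 2) ∧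
      |LinearMap.det (L : E →ₗ[ℝ] E)| = √(1 + c ^ 2 * ‖a‖ ^ 2) := by
  set q : ℝ := √(1 + c ^ 2 * ‖a‖ ^ 2)
  have hq : q ^ 2 = 1 + c ^ 2 * ‖a‖ ^ 2 := Real.sq_sqrt (by positivity)
  have hq0 : 0 < q := Real.sqrt_pos.2 (by positivity)
  set β : ℝ := c ^ 2 / (1 + q)
  have hβ : β * (1 + q) = c ^ 2 := div_mul_cancel₀ _ (by positivity)
  have hβa : β * ‖a‖ ^ 2 = q - 1 := by
    have : (1 + q) * (β * ‖a‖ ^ 2) = (1 + q) * (q - 1) := by linear_combination ‖a‖ ^ 2 * hβ - hq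
    exact mul_left_cancel₀ (by positivity) this
  set f : E →ₗ[ℝ] E := LinearMap.transvection (innerₛₗ ℝ a) (β • a)
  have hf : ∀ v, f v = v + ⟪a, v⟫ • β • a := fun v => by simp [f, LinearMap.transvection]
  have hdet : LinearMap.det f = q := by
    rw [LinearMap.transvection.det]
    simp only [innerₛₗ_apply_apply, inner_smul_right, real_inner_self_eq_norm_sq]
    linarith
  have hunit : IsUnit (LinearMap.det f) := by rw [hdet]; exact hq0.ne'.isUnit
  set e : E ≃ₗ[ℝ] E := LinearEquiv.ofIsUnitDet (f := f) (v := Module.finBasis ℝ E)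
    (v' := Module.finBasis ℝ E) (by rwa [LinearMap.det_toMatrix])
  refine ⟨e.toContinuousLinearEquiv, fun v => ?_, ?_⟩
  · have h1 : e.toContinuousLinearEquiv v = v + ⟪a, v⟫ • β • a := hf v
    rw [h1, norm_add_sq_real, inner_smul_right, inner_smul_right, real_inner_comm a v, norm_smul,
      norm_smul, mul_pow, mul_pow, Real.norm_eq_abs, Real.norm_eq_abs, sq_abs, sq_abs, mul_pow]
    linear_combination ⟪a, v⟫ ^ 2 * (β * hβa + hβ)
  · have h1 : ((e.toContinuousLinearEquiv : E ≃L[ℝ] E) : E →ₗ[ℝ] E) = f := by ext v; rfl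
    rw [h1, hdet, abs_of_pos hq0]

end Wave

end

section

open scoped Topology NNReal

namespace Wave

variable {m : ℕ}

/-- The sheet `τ = σ √(|ξ|² - s)` of the level set `g⁻¹(s)`, as a graph over `ξ`. -/
def sheet (σ s : ℝ) (ξ : EuclideanSpace ℝ (Fin m)) : Spacetime m :=
  embed ξ (σ * √(‖ξ‖ ^ 2 - s))

/-- The domain over which the sheets of `g⁻¹(s)` with `τ ≠ 0` are graphs. -/
def sheetDomain (m : ℕ) (s : ℝ) : Set (EuclideanSpace ℝ (Fin m)) := {ξ | s < ‖ξ‖ ^ 2}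

theorem isOpen_sheetDomain (s : ℝ) : IsOpen (sheetDomain m s) :=
  isOpen_lt continuous_const (by fun_prop)

theorem continuous_sheet (σ s : ℝ) : Continuous (sheet σ s : _ → Spacetime m) :=
  (embedCLM m).continuous.comp (by fun_prop : Continuous fun ξ : EuclideanSpace ℝ (Fin m) =>
    (ξ, σ * √(‖ξ‖ ^ 2 - s)))

/-- The surface area density of a sheet of `g⁻¹(s)` with respect to `ξ`. -/
def sheetJacobian (s : ℝ) (ξ : EuclideanSpace ℝ (Fin m)) : ℝ :=
  √(1 + ‖ξ‖ ^ 2 / (‖ξ‖ ^ 2 - s))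

theorem measurable_sheetJacobian (s : ℝ) :
    Measurable (sheetJacobian s : EuclideanSpace ℝ (Fin m) → ℝ) := by
  unfold sheetJacobian; fun_prop

theorem image_sheet {σ : ℝ} (hσ : σ ^ 2 = 1) (s : ℝ) :
    sheet σ s '' sheetDomain m s = {z | waveSymbol z = s ∧ 0 < σ * timeCoord z} := by
  ext z
  constructor
  · rintro ⟨ξ, hξ, rfl⟩
    have hξ' : 0 < ‖ξ‖ ^ 2 - s := sub_pos.2 hξ
    simp only [sheet, Set.mem_ofPred_eq, waveSymbol_embed, timeCoord_embed, mul_pow, hσ,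
      Real.sq_sqrt hξ'.le, ← mul_assoc, ← sq]
    exact ⟨by ring, by simpa using hξ'⟩
  · rintro ⟨hz, hτ⟩
    rw [← embed_space z, waveSymbol_embed] at hz
    have hτ0 : 0 < timeCoord z ^ 2 := by
      have : timeCoord z ≠ 0 := by rintro h; simp [h] at hτ
      positivity
    refine ⟨space z, by simp only [sheetDomain, Set.mem_ofPred_eq]; linarith, ?_⟩
    have h1 : ‖space z‖ ^ 2 - s = (σ * timeCoord z) ^ 2 := by rw [mul_pow, hσ]; linarith
    rw [sheet, h1, Real.sqrt_sq hτ.le, ← mul_assoc, ← sq, hσ, one_mul, embed_space]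

theorem continuous_timeCoord : Continuous (timeCoord : Spacetime m → ℝ) := by
  unfold timeCoord; fun_prop

theorem continuous_waveSymbol : Continuous (waveSymbol : Spacetime m → ℝ) := by
  have := continuous_timeCoord (m := m)
  unfold waveSymbol; fun_prop

theorem measurableSet_image_sheet {σ : ℝ} (hσ : σ ^ 2 = 1) (s : ℝ) :
    MeasurableSet (sheet σ s '' sheetDomain m s) := by
  rw [image_sheet hσ]
  exact (measurableSet_eq_fun continuous_waveSymbol.measurable measurable_const).inter
    (measurableSet_lt measurable_const (continuous_timeCoord.measurable.const_mul σ))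

theorem map_space_hausdorffMeasure_sheet {σ : ℝ} (hσ : σ ^ 2 = 1) (s : ℝ) :
    (μH[(m : ℝ)].restrict (sheet σ s '' sheetDomain m s)).map space =
      (μH[(m : ℝ)].restrict (sheetDomain m s)).withDensity
        fun ξ => ENNReal.ofReal (sheetJacobian s ξ) := by
  have key := map_hausdorffMeasure_restrict_image (Φ := sheet (m := m) σ s) (P := space)
    (J := sheetJacobian s) (isOpen_sheetDomain s) (fun y => space_embed _ _) measurable_space
    (fun ξ hξ => ?_) (fun ξ hξ => ?_)
  · simpa using key
  · have hξ' : ‖ξ‖ ^ 2 - s ≠ 0 := (sub_pos.2 hξ).ne'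
    unfold sheetJacobian
    fun_prop (disch := assumption)
  · have hξ' : 0 < ‖ξ‖ ^ 2 - s := sub_pos.2 hξ
    set q := √(‖ξ‖ ^ 2 - s)
    have hq : q ^ 2 = ‖ξ‖ ^ 2 - s := Real.sq_sqrt hξ'.le
    have hq0 : 0 < q := Real.sqrt_pos.2 hξ'
    obtain ⟨L, hL, hdet⟩ := exists_equiv_norm_sq_add_inner_sq ξ (σ / q)
    have hd : HasStrictFDerivAt (fun y : EuclideanSpace ℝ (Fin m) => σ * √(‖y‖ ^ 2 - s))
        ((σ / q) • innerSL ℝ ξ) ξ := by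
      have h1 := (((hasStrictFDerivAt_norm_sq ξ).sub_const s).sqrt hξ'.ne').const_mul σ
      refine h1.congr_fderiv ?_
      rw [← Nat.cast_smul_eq_nsmul ℝ, smul_smul, smul_smul]
      congr 1
      push_cast
      field_simp
      rfl
    refine ⟨(embedCLM m).comp ((ContinuousLinearMap.id ℝ _).prod ((σ / q) • innerSL ℝ ξ)), L,
      ?_, fun v => ?_, ?_⟩
    · exact (embedCLM m).hasStrictFDerivAt.comp ξ ((hasStrictFDerivAt_id ξ).prodMk hd)
    · rw [← sq_eq_sq₀ (norm_nonneg _) (norm_nonneg _), hL]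
      simp [norm_sq_embed]
    · rw [hdet, sheetJacobian, div_pow, hσ, hq, one_div_mul_eq_div]

theorem integrableOn_sheet_iff {σ : ℝ} (hσ : σ ^ 2 = 1) (s : ℝ) {f : Spacetime m → ℂ}
    (hf : Continuous f) :
    IntegrableOn f (sheet σ s '' sheetDomain m s) μH[(m : ℝ)] ↔
      IntegrableOn (fun ξ => sheetJacobian s ξ • f (sheet σ s ξ)) (sheetDomain m s)
        μH[(m : ℝ)] := by
  have h1 : IntegrableOn f (sheet σ s '' sheetDomain m s) μH[(m : ℝ)] ↔
      IntegrableOn ((fun ξ => f (sheet σ s ξ)) ∘ space) (sheet σ s '' sheetDomain m s)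
        μH[(m : ℝ)] := by
    refine integrableOn_congr_fun ?_ (measurableSet_image_sheet hσ s)
    rintro _ ⟨ξ, -, rfl⟩
    simp [sheet]
  rw [h1, IntegrableOn, ← integrable_map_measure
    (g := fun ξ => f (sheet σ s ξ)) (hf.comp (continuous_sheet σ s)).aestronglyMeasurable measurable_space.aemeasurable,
    map_space_hausdorffMeasure_sheet hσ, integrable_withDensity_iff_integrable_smul'
      (measurable_sheetJacobian s).ennreal_ofReal (by simp)]
  simp [IntegrableOn, sheetJacobian, Real.sqrt_nonneg]

theorem setIntegral_sheet {σ : ℝ} (hσ : σ ^ 2 = 1) (s : ℝ) {f : Spacetime m → ℂ}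
    (hf : Continuous f) :
    ∫ z in sheet σ s '' sheetDomain m s, f z ∂μH[(m : ℝ)] =
      ∫ ξ in sheetDomain m s, sheetJacobian s ξ • f (sheet σ s ξ) ∂μH[(m : ℝ)] := by
  have h1 : ∫ z in sheet σ s '' sheetDomain m s, f z ∂μH[(m : ℝ)] =
      ∫ z in sheet σ s '' sheetDomain m s, f (sheet σ s (space z)) ∂μH[(m : ℝ)] := by
    refine setIntegral_congr_fun (measurableSet_image_sheet hσ s) ?_
    rintro _ ⟨ξ, -, rfl⟩
    simp [sheet]
  rw [h1, ← integral_map (φ := space) (f := fun ξ => f (sheet σ s ξ)) measurable_space.aemeasurable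
    (hf.comp (continuous_sheet σ s)).aestronglyMeasurable,
    map_space_hausdorffMeasure_sheet hσ, integral_withDensity_eq_integral_toReal_smul
      (measurable_sheetJacobian s).ennreal_ofReal (by simp)]
  simp [sheetJacobian, Real.sqrt_nonneg]

/-- The equator `τ = 0` of a level set is negligible. -/
theorem hausdorffMeasure_equator [NeZero m] (s : ℝ) :
    μH[(m : ℝ)] {z : Spacetime m | (waveSymbol z = s ∧ z ≠ 0) ∧ timeCoord z = 0} = 0 := by
  have hiso : Isometry fun ξ : EuclideanSpace ℝ (Fin m) => embed ξ 0 := by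
    refine Isometry.of_dist_eq fun ξ ξ' => ?_
    have h1 : embed ξ 0 - embed ξ' 0 = embed (ξ - ξ') (0 : ℝ) := by
      simpa using ((embedCLM m).map_sub (ξ, 0) (ξ', 0)).symm
    rw [dist_eq_norm, dist_eq_norm, h1, ← sq_eq_sq₀ (norm_nonneg _) (norm_nonneg _), norm_sq_embed]
    simp
  refine measure_mono_null (t := (fun ξ => embed ξ 0) '' Metric.sphere 0 √s) ?_ ?_
  · rintro z ⟨⟨hz, -⟩, hτ⟩
    refine ⟨space z, ?_, by simpa [hτ] using embed_space z⟩
    rw [← embed_space z, waveSymbol_embed, hτ] at hz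
    simp [← hz]
  · rw [hiso.hausdorffMeasure_image (Or.inl (by positivity))]
    have := Measure.addHaar_sphere (μH[(Module.finrank ℝ (EuclideanSpace ℝ (Fin m)) : ℝ)])
      (0 : EuclideanSpace ℝ (Fin m)) √s
    simpa using this

theorem levelMeasure_eq [NeZero m] (s : ℝ) :
    levelMeasure m s = μH[(m : ℝ)].restrict (sheet 1 s '' sheetDomain m s ∪
      sheet (-1) s '' sheetDomain m s) := by
  refine Measure.restrict_congr_set ?_
  rw [image_sheet (by norm_num), image_sheet (by norm_num)]
  refine (ae_eq_set (μ := μH[(m : ℝ)])).2 ⟨measure_mono_null ?_ (hausdorffMeasure_equator s), ?_⟩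
  · rintro z ⟨hz, hz'⟩
    refine ⟨hz, ?_⟩
    by_contra h
    rcases lt_or_gt_of_ne h with h | h
    · exact hz' (Or.inr ⟨hz.1, by linarith⟩)
    · exact hz' (Or.inl ⟨hz.1, by linarith⟩)
  · convert measure_empty (μ := μH[(m : ℝ)])
    rw [Set.eq_empty_iff_forall_notMem]
    rintro z ⟨hz, hz'⟩
    refine hz' ⟨hz.elim And.left And.left, ?_⟩
    rintro rfl
    rcases hz with ⟨-, h⟩ | ⟨-, h⟩ <;> simp [timeCoord] at h

theorem disjoint_sheets (s : ℝ) : Disjoint (sheet 1 s '' sheetDomain m s)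
    (sheet (-1) s '' sheetDomain m s) := by
  rw [image_sheet (by norm_num), image_sheet (by norm_num), Set.disjoint_left]
  rintro z ⟨-, h⟩ ⟨-, h'⟩
  linarith

end Wave

end

section

open scoped Topology NNReal

namespace Wave

/-- The additive character `x ↦ e^{2πix}`. -/
def char (x : ℝ) : ℂ := Complex.exp (2 * (π : ℂ) * Complex.I * (x : ℂ))

theorem char_add (x y : ℝ) : char (x + y) = char x * char y := by
  rw [char, char, char, ← Complex.exp_add]; push_cast; ring_nf

@[simp] theorem char_zero : char 0 = 1 := by simp [char]

@[simp] theorem norm_char (x : ℝ) : ‖char x‖ = 1 := by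
  rw [char, show 2 * (π : ℂ) * Complex.I * (x : ℂ) = ((2 * π * x : ℝ) : ℂ) * Complex.I by
    push_cast; ring, Complex.norm_exp_ofReal_mul_I]

theorem hasDerivAt_char (x : ℝ) : HasDerivAt char (2 * π * Complex.I * char x) x := by
  have h1 : HasDerivAt (fun y : ℝ => 2 * (π : ℂ) * Complex.I * (y : ℂ))
      (2 * (π : ℂ) * Complex.I * 1) x := (Complex.ofRealCLM.hasDerivAt (x := x)).const_mul _
  refine (h1.cexp.congr_deriv ?_ : HasDerivAt char _ x)
  rw [char]; ring

@[fun_prop] theorem contDiff_char {n : WithTop ℕ∞} : ContDiff ℝ n char := by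
  unfold char
  exact (contDiff_const.mul Complex.ofRealCLM.contDiff).cexp

@[fun_prop] theorem continuous_char : Continuous char := contDiff_char (n := 0).continuous

@[fun_prop] theorem measurable_char : Measurable char := continuous_char.measurable

/-- The density, as a function of `p = |ξ|²`, of `η σ_s` on each sheet `τ = ±√(p - s)`, where
`H (|z|²) = |z| η(z)`. -/
def sheetDensity (H : ℝ → ℝ) (s p : ℝ) : ℝ := if s < p then H (2 * p - s) / √(p - s) else 0

variable {m : ℕ}

theorem sheetJacobian_mul {η : Spacetime m → ℝ} {H : ℝ → ℝ}
    (hH : ∀ z, ‖z‖ * η z = H (‖z‖ ^ 2)) {σ : ℝ} (hσ : σ ^ 2 = 1) {s : ℝ}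
    {ξ : EuclideanSpace ℝ (Fin m)} (hξ : ξ ∈ sheetDomain m s) :
    sheetJacobian s ξ * η (sheet σ s ξ) = sheetDensity H s (‖ξ‖ ^ 2) := by
  have hξ' : 0 < ‖ξ‖ ^ 2 - s := sub_pos.2 hξ
  have hn : ‖sheet σ s ξ‖ ^ 2 = 2 * ‖ξ‖ ^ 2 - s := by
    rw [sheet, norm_sq_embed, mul_pow, hσ, Real.sq_sqrt hξ'.le]; ring
  rw [sheetDensity, if_pos (show s < ‖ξ‖ ^ 2 from hξ), ← hn, ← hH, sheetJacobian, mul_div_right_comm]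
  congr 1
  rw [one_add_div hξ'.ne', show ‖ξ‖ ^ 2 - s + ‖ξ‖ ^ 2 = ‖sheet σ s ξ‖ ^ 2 by rw [hn]; ring,
    Real.sqrt_div' _ hξ'.le, Real.sqrt_sq (norm_nonneg _)]

theorem indicator_sheet {η : Spacetime m → ℝ} {H : ℝ → ℝ}
    (hH : ∀ z, ‖z‖ * η z = H (‖z‖ ^ 2)) {σ : ℝ} (hσ : σ ^ 2 = 1) (s : ℝ) (w : Spacetime m) :
    (sheetDomain m s).indicator
      (fun ξ => sheetJacobian s ξ • ((η (sheet σ s ξ) : ℂ) * char ⟪sheet σ s ξ, w⟫)) =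
    fun ξ => char (⟪ξ, space w⟫ + σ * (timeCoord w * √(‖ξ‖ ^ 2 - s))) *
      (sheetDensity H s (‖ξ‖ ^ 2) : ℂ) := by
  ext ξ
  by_cases hξ : ξ ∈ sheetDomain m s
  · rw [Set.indicator_of_mem hξ, ← sheetJacobian_mul hH hσ hξ, sheet, inner_embed,
      Complex.real_smul]
    push_cast
    ring_nf
  · rw [Set.indicator_of_notMem hξ, sheetDensity, if_neg (by exact hξ)]
    simp

theorem integrable_char_mul_iff {E : Type*} [TopologicalSpace E] [MeasurableSpace E]
    [OpensMeasurableSpace E] {μ : Measure E} {φ : E → ℝ}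
    (hφ : Continuous φ) {D : E → ℝ} :
    Integrable (fun ξ => char (φ ξ) * (D ξ : ℂ)) μ ↔ Integrable D μ := by
  have hbd : ∀ ψ : E → ℝ, Continuous ψ → ∀ {g : E → ℂ}, Integrable g μ →
      Integrable (fun ξ => char (ψ ξ) * g ξ) μ := fun ψ hψ g hg =>
    hg.bdd_mul (c := 1) (continuous_char.comp hψ).measurable.aestronglyMeasurable
      (Eventually.of_forall fun ξ => (norm_char _).le)
  constructor
  · intro h
    have h1 := hbd (fun ξ => -φ ξ) (by fun_prop) h
    simp only [← mul_assoc, ← char_add, neg_add_cancel, char_zero, one_mul] at h1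
    exact h1.re
  · intro h
    exact hbd φ hφ h.ofReal

/-- The inverse Fourier transform of `η σ_s` as an integral over `ξ`. -/
theorem sigmaCheck_eq [NeZero m] {η : Spacetime m → ℝ} (hη : Continuous η) {H : ℝ → ℝ}
    (hH : ∀ z, ‖z‖ * η z = H (‖z‖ ^ 2)) (s : ℝ) (w : Spacetime m) :
    (Integrable (fun ξ : EuclideanSpace ℝ (Fin m) => sheetDensity H s (‖ξ‖ ^ 2)) μH[(m : ℝ)] ∧
      sigmaCheck η s w = ∫ ξ, char ⟪ξ, space w⟫ * ((sheetDensity H s (‖ξ‖ ^ 2) : ℂ) *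
        (char (timeCoord w * √(‖ξ‖ ^ 2 - s)) + char (-timeCoord w * √(‖ξ‖ ^ 2 - s))))
        ∂μH[(m : ℝ)]) ∨
    (¬ Integrable (fun ξ : EuclideanSpace ℝ (Fin m) => sheetDensity H s (‖ξ‖ ^ 2)) μH[(m : ℝ)] ∧
      sigmaCheck η s w = 0) := by
  have hf : Continuous fun z => (η z : ℂ) * char ⟪z, w⟫ := by fun_prop
  have hsheet : ∀ σ : ℝ, σ ^ 2 = 1 →
      (IntegrableOn (fun z => (η z : ℂ) * char ⟪z, w⟫) (sheet σ s '' sheetDomain m s)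
        μH[(m : ℝ)] ↔
        Integrable (fun ξ : EuclideanSpace ℝ (Fin m) => sheetDensity H s (‖ξ‖ ^ 2)) μH[(m : ℝ)]) ∧
      ∫ z in sheet σ s '' sheetDomain m s, (η z : ℂ) * char ⟪z, w⟫ ∂μH[(m : ℝ)] =
        ∫ ξ, char (⟪ξ, space w⟫ + σ * (timeCoord w * √(‖ξ‖ ^ 2 - s))) *
      (sheetDensity H s (‖ξ‖ ^ 2) : ℂ) ∂μH[(m : ℝ)] := by
    intro σ hσ
    constructor
    · rw [integrableOn_sheet_iff hσ s hf,
        ← integrable_indicator_iff (isOpen_sheetDomain s).measurableSet, indicator_sheet hH hσ,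
        integrable_char_mul_iff (by fun_prop)]
    · rw [setIntegral_sheet hσ s hf, ← integral_indicator (isOpen_sheetDomain s).measurableSet,
        indicator_sheet hH hσ]
  obtain ⟨hp1, hp2⟩ := hsheet 1 (by norm_num)
  obtain ⟨hm1, hm2⟩ := hsheet (-1) (by norm_num)
  have hs : sigmaCheck η s w = ∫ z, (η z : ℂ) * char ⟪z, w⟫ ∂levelMeasure m s := rfl
  rw [levelMeasure_eq] at hs
  by_cases hD : Integrable (fun ξ : EuclideanSpace ℝ (Fin m) => sheetDensity H s (‖ξ‖ ^ 2))
      μH[(m : ℝ)]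
  · refine Or.inl ⟨hD, ?_⟩
    rw [hs, setIntegral_union (disjoint_sheets s) (measurableSet_image_sheet (by norm_num) s)
      (hp1.2 hD) (hm1.2 hD), hp2, hm2, ← integral_add
        ((integrable_char_mul_iff (by fun_prop)).2 hD)
        ((integrable_char_mul_iff (by fun_prop)).2 hD)]
    congr 1
    ext ξ
    rw [char_add, char_add, one_mul, neg_one_mul, neg_mul]
    ring
  · refine Or.inr ⟨hD, ?_⟩
    rw [hs, integral_undef]
    intro h
    exact hD (hp1.1 (h.mono_measure (Measure.restrict_mono Set.subset_union_left le_rfl)))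

end Wave

end

section

open scoped Topology NNReal

namespace Wave

/-- The positive part of the power function. -/
def posPow (α y : ℝ) : ℝ := if 0 < y then y ^ α else 0

theorem exists_orthonormalBasis_smul_eq {k : ℕ} (x : EuclideanSpace ℝ (Fin (k + 1))) :
    ∃ b : OrthonormalBasis (Fin (k + 1)) ℝ (EuclideanSpace ℝ (Fin (k + 1))), x = ‖x‖ • b 0 := by
  by_cases hx : x = 0
  · exact ⟨EuclideanSpace.basisFun _ _, by simp [hx]⟩
  have hx' : ‖x‖ ≠ 0 := norm_ne_zero_iff.2 hx
  have ho : Orthonormal ℝ (Set.domRestrict {0} fun _ : Fin (k + 1) => ‖x‖⁻¹ • x) := by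
    rw [orthonormal_iff_ite]
    rintro ⟨i, rfl⟩ ⟨j, rfl⟩
    change ⟪‖x‖⁻¹ • x, ‖x‖⁻¹ • x⟫ = _
    rw [real_inner_smul_left, real_inner_smul_right, real_inner_self_eq_norm_sq, if_pos rfl]
    field_simp
  obtain ⟨b, hb⟩ := ho.exists_orthonormalBasis_extension_of_card_eq (by simp)
  refine ⟨b, ?_⟩
  rw [hb 0 rfl, smul_smul, mul_inv_cancel₀ hx', one_smul]

/-- Splitting off the first coordinate of Euclidean space. -/
theorem exists_measurePreserving_split (k : ℕ) :
    ∃ Ψ : ℝ × EuclideanSpace ℝ (Fin k) ≃ᵐ EuclideanSpace ℝ (Fin (k + 1)),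
      MeasurePreserving Ψ (volume.prod volume) volume ∧
        ∀ u v, Ψ (u, v) 0 = u ∧ ‖Ψ (u, v)‖ ^ 2 = u ^ 2 + ‖v‖ ^ 2 := by
  have h1 := (MeasurePreserving.id (volume : Measure ℝ)).prod
    (EuclideanSpace.volume_preserving_symm_measurableEquiv_toLp (Fin k))
  have h2 := (volume_preserving_piFinSuccAbove (fun _ : Fin (k + 1) => ℝ) 0).symm
  have h3 := (EuclideanSpace.volume_preserving_symm_measurableEquiv_toLp (Fin (k + 1))).symm
  refine ⟨((MeasurableEquiv.refl ℝ).prodCongr (MeasurableEquiv.toLp 2 (Fin k → ℝ)).symm).trans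
    ((MeasurableEquiv.piFinSuccAbove (fun _ : Fin (k + 1) => ℝ) 0).symm.trans
      (MeasurableEquiv.toLp 2 (Fin (k + 1) → ℝ))), h3.comp (h2.comp h1), fun u v => ⟨?_, ?_⟩⟩
  · simp [MeasurableEquiv.piFinSuccAbove]
    rfl
  · rw [EuclideanSpace.norm_sq_eq, EuclideanSpace.norm_sq_eq, Fin.sum_univ_succ]
    simp [MeasurableEquiv.piFinSuccAbove]
    rfl

theorem integral_radial {k : ℕ} [NeZero k] (Q : ℝ → ℂ) :
    ∫ v : EuclideanSpace ℝ (Fin k), Q (‖v‖ ^ 2) =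
      ((k * (volume : Measure (EuclideanSpace ℝ (Fin k))).real (Metric.ball 0 1) / 2 : ℝ) : ℂ) *
        ∫ y in Set.Ioi (0 : ℝ), ((y ^ (((k : ℝ) - 2) / 2) : ℝ) : ℂ) * Q y := by
  have hk : 1 ≤ k := NeZero.one_le
  rw [integral_fun_norm_addHaar volume (fun r => Q (r ^ 2)), finrank_euclideanSpace_fin,
    ← integral_comp_rpow_Ioi (fun y => ((y ^ (((k : ℝ) - 2) / 2) : ℝ) : ℂ) * Q y)
      (p := 2) two_ne_zero, nsmul_eq_mul, ← integral_const_mul, mul_smul_comm,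
    Complex.real_smul, ← integral_const_mul, ← integral_const_mul]
  refine setIntegral_congr_fun measurableSet_Ioi fun y hy => ?_
  have hy : 0 < y := hy
  have h1 : y ^ (k - 1) = y * (y ^ (2 : ℝ)) ^ (((k : ℝ) - 2) / 2) := by
    rw [← Real.rpow_mul hy.le, ← Real.rpow_natCast, Nat.cast_sub hk, mul_div_cancel₀ _ two_ne_zero,
      Nat.cast_one, show (k : ℝ) - 1 = 1 + (k - 2) by ring, Real.rpow_add hy, Real.rpow_one]
  rw [h1]
  simp only [Complex.real_smul, Real.rpow_two]
  rw [show (2 : ℝ) - 1 = 1 by norm_num, Real.rpow_one, abs_two]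
  push_cast
  ring

theorem integral_char_mul_radial {k : ℕ} [NeZero k] :
    ∃ c : ℂ, ∀ (x : EuclideanSpace ℝ (Fin (k + 1))) (Q : ℝ → ℂ),
      Integrable (fun ξ : EuclideanSpace ℝ (Fin (k + 1)) => char ⟪ξ, x⟫ * Q (‖ξ‖ ^ 2))
        μH[((k + 1 : ℕ) : ℝ)] →
      Integrable (fun u : ℝ => char (‖x‖ * u) *
        ∫ y in Set.Ioi (0 : ℝ), ((y ^ (((k : ℝ) - 2) / 2) : ℝ) : ℂ) * Q (u ^ 2 + y)) ∧
      ∫ ξ : EuclideanSpace ℝ (Fin (k + 1)), char ⟪ξ, x⟫ * Q (‖ξ‖ ^ 2) ∂μH[((k + 1 : ℕ) : ℝ)] =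
        c * ∫ u : ℝ, char (‖x‖ * u) *
          ∫ y in Set.Ioi (0 : ℝ), ((y ^ (((k : ℝ) - 2) / 2) : ℝ) : ℂ) * Q (u ^ 2 + y) := by
  obtain ⟨Ψ, hΨ, hΨ'⟩ := exists_measurePreserving_split k
  set μ : Measure (EuclideanSpace ℝ (Fin (k + 1))) := μH[((k + 1 : ℕ) : ℝ)] with hμ
  have : μ.IsAddHaarMeasure := by
    have := isAddHaarMeasure_hausdorffMeasure (E := EuclideanSpace ℝ (Fin (k + 1)))
    rwa [finrank_euclideanSpace_fin] at this
  set c₁ : ℝ := k * (volume : Measure (EuclideanSpace ℝ (Fin k))).real (Metric.ball 0 1) / 2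
    with hc₁
  have hc₁' : (c₁ : ℂ) ≠ 0 := by
    have h1 : (0 : ℝ) < k := by exact_mod_cast NeZero.pos k
    have h2 : 0 < (volume : Measure (EuclideanSpace ℝ (Fin k))).real (Metric.ball 0 1) :=
      ENNReal.toReal_pos (Metric.measure_ball_pos _ _ one_pos).ne' measure_ball_lt_top.ne
    exact_mod_cast (by positivity : c₁ ≠ 0)
  refine ⟨μ.addHaarScalarFactor volume * c₁, fun x Q hQ => ?_⟩
  obtain ⟨b, hb⟩ := exists_orthonormalBasis_smul_eq x
  have hvol : Integrable (fun ξ : EuclideanSpace ℝ (Fin (k + 1)) => char ⟪ξ, x⟫ * Q (‖ξ‖ ^ 2))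
      volume := by
    rw [Measure.isAddLeftInvariant_eq_smul volume μ]
    exact hQ.smul_measure_nnreal
  have hmp := b.measurePreserving_repr_symm.comp hΨ
  have hme : MeasurableEmbedding (b.repr.symm ∘ Ψ) :=
    b.repr.symm.toHomeomorph.measurableEmbedding.comp Ψ.measurableEmbedding
  have hcomp : ∀ p : ℝ × EuclideanSpace ℝ (Fin k),
      char ⟪(b.repr.symm ∘ Ψ) p, x⟫ * Q (‖(b.repr.symm ∘ Ψ) p‖ ^ 2) =
        char (‖x‖ * p.1) * Q (p.1 ^ 2 + ‖p.2‖ ^ 2) := by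
    rintro ⟨u, v⟩
    have h1 : ⟪b.repr.symm (Ψ (u, v)), x⟫ = ‖x‖ * u := by
      conv_lhs => rw [hb]
      rw [real_inner_smul_right, real_inner_comm, ← b.repr_apply_apply,
        LinearIsometryEquiv.apply_symm_apply, (hΨ' u v).1]
    rw [Function.comp_apply, LinearIsometryEquiv.norm_map, (hΨ' u v).2, h1]
  have hint : Integrable (fun p : ℝ × EuclideanSpace ℝ (Fin k) =>
      char (‖x‖ * p.1) * Q (p.1 ^ 2 + ‖p.2‖ ^ 2)) (volume.prod volume) := by
    have := (hmp.integrable_comp_emb hme).2 hvol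
    exact this.congr (Eventually.of_forall hcomp)
  have hfib : ∀ u : ℝ, ∫ v : EuclideanSpace ℝ (Fin k), char (‖x‖ * u) * Q (u ^ 2 + ‖v‖ ^ 2) =
      c₁ * (char (‖x‖ * u) *
        ∫ y in Set.Ioi (0 : ℝ), ((y ^ (((k : ℝ) - 2) / 2) : ℝ) : ℂ) * Q (u ^ 2 + y)) := by
    intro u
    rw [integral_const_mul, integral_radial fun y => Q (u ^ 2 + y)]
    ring
  constructor
  · have := hint.integral_prod_left
    simp only [hfib] at this
    exact (integrable_const_mul_iff hc₁'.isUnit _).1 this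
  · conv_lhs => rw [Measure.isAddLeftInvariant_eq_smul μ volume]
    rw [integral_smul_nnreal_measure, ← hmp.integral_comp hme]
    simp only [hcomp]
    rw [integral_prod _ hint]
    simp only [hfib]
    rw [integral_const_mul, mul_assoc]
    rfl

end Wave

end

section

open scoped Topology NNReal

namespace Wave

/-- The contribution to `σ_s^∨` of the slice of `ℝᵐ` at height `u` along `x`, in terms of
`τ = √(|ξ|² - s)` and `κ = u² - s`. -/
def slice (H : ℝ → ℝ) (α s κ t : ℝ) : ℂ :=
  ∫ τ in Set.Ioi (0 : ℝ), (char (t * τ) + char (-t * τ)) *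
    ((H (2 * τ ^ 2 + s) * posPow α (τ ^ 2 - κ) : ℝ) : ℂ)

theorem integral_sheetDensity (H : ℝ → ℝ) (α s u t : ℝ) :
    ∫ y in Set.Ioi (0 : ℝ), ((y ^ α : ℝ) : ℂ) * ((sheetDensity H s (u ^ 2 + y) : ℂ) *
      (char (t * √(u ^ 2 + y - s)) + char (-t * √(u ^ 2 + y - s)))) =
    2 * slice H α s (u ^ 2 - s) t := by
  set κ := u ^ 2 - s with hκ
  have h1 : ∫ y in Set.Ioi (0 : ℝ), ((y ^ α : ℝ) : ℂ) * ((sheetDensity H s (u ^ 2 + y) : ℂ) *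
      (char (t * √(u ^ 2 + y - s)) + char (-t * √(u ^ 2 + y - s)))) =
      ∫ y : ℝ, (posPow α y : ℂ) * ((sheetDensity H s (u ^ 2 + y) : ℂ) *
      (char (t * √(u ^ 2 + y - s)) + char (-t * √(u ^ 2 + y - s)))) := by
    rw [← integral_indicator measurableSet_Ioi]
    congr 1
    ext y
    by_cases hy : 0 < y
    · rw [Set.indicator_of_mem (by exact hy), posPow, if_pos hy]
    · rw [Set.indicator_of_notMem (by exact hy), posPow, if_neg hy]; simp
  rw [h1, ← integral_sub_right_eq_self _ κ]
  have h2 : ∫ v : ℝ, (posPow α (v - κ) : ℂ) * ((sheetDensity H s (u ^ 2 + (v - κ)) : ℂ) *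
      (char (t * √(u ^ 2 + (v - κ) - s)) + char (-t * √(u ^ 2 + (v - κ) - s)))) =
      ∫ v in Set.Ioi (0 : ℝ), (posPow α (v - κ) : ℂ) * (((H (2 * v + s) / √v : ℝ) : ℂ) *
      (char (t * √v) + char (-t * √v))) := by
    rw [← integral_indicator measurableSet_Ioi]
    congr 1
    ext v
    have e1 : u ^ 2 + (v - κ) = v + s := by rw [hκ]; ring
    rw [e1, add_sub_cancel_right, sheetDensity]
    by_cases hv : 0 < v
    · rw [Set.indicator_of_mem (by exact hv), if_pos (by linarith), add_sub_cancel_right,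
        show 2 * (v + s) - s = 2 * v + s by ring]
    · rw [Set.indicator_of_notMem (by exact hv), if_neg (by linarith)]; simp
  rw [h2, ← integral_comp_rpow_Ioi _ (two_ne_zero (α := ℝ)), slice, ← integral_const_mul]
  refine setIntegral_congr_fun measurableSet_Ioi fun τ hτ => ?_
  have hτ : 0 < τ := hτ
  simp only [Complex.real_smul, Real.rpow_two, Real.sqrt_sq hτ.le]
  rw [show (2 : ℝ) - 1 = 1 by norm_num, Real.rpow_one, abs_two]
  have : (τ : ℂ) ≠ 0 := by exact_mod_cast hτ.ne'
  push_cast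
  field_simp

theorem sigmaCheck_eq_integral_slice {k : ℕ} [NeZero k] :
    ∃ c : ℂ, ∀ {η : Spacetime (k + 1) → ℝ}, Continuous η → ∀ {H : ℝ → ℝ},
      (∀ z, ‖z‖ * η z = H (‖z‖ ^ 2)) → ∀ (s : ℝ) (w : Spacetime (k + 1)),
      (Integrable (fun u : ℝ => char (‖space w‖ * u) *
          slice H (((k : ℝ) - 2) / 2) s (u ^ 2 - s) (timeCoord w)) ∧
        sigmaCheck η s w = c * ∫ u : ℝ, char (‖space w‖ * u) *
          slice H (((k : ℝ) - 2) / 2) s (u ^ 2 - s) (timeCoord w)) ∨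
      (¬ Integrable (fun ξ : EuclideanSpace ℝ (Fin (k + 1)) => sheetDensity H s (‖ξ‖ ^ 2))
        μH[((k + 1 : ℕ) : ℝ)] ∧ sigmaCheck η s w = 0) := by
  obtain ⟨c, hc⟩ := integral_char_mul_radial (k := k)
  refine ⟨c * 2, fun {η} hη {H} hH s w => ?_⟩
  refine (sigmaCheck_eq hη hH s w).imp (fun ⟨hD, h⟩ => ?_) id
  have hint : Integrable (fun ξ : EuclideanSpace ℝ (Fin (k + 1)) => char ⟪ξ, space w⟫ *
      ((sheetDensity H s (‖ξ‖ ^ 2) : ℂ) * (char (timeCoord w * √(‖ξ‖ ^ 2 - s)) +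
        char (-timeCoord w * √(‖ξ‖ ^ 2 - s))))) μH[((k + 1 : ℕ) : ℝ)] := by
    have e : ∀ ξ : EuclideanSpace ℝ (Fin (k + 1)), char ⟪ξ, space w⟫ *
        ((sheetDensity H s (‖ξ‖ ^ 2) : ℂ) * (char (timeCoord w * √(‖ξ‖ ^ 2 - s)) +
          char (-timeCoord w * √(‖ξ‖ ^ 2 - s)))) =
        char (⟪ξ, space w⟫ + timeCoord w * √(‖ξ‖ ^ 2 - s)) * (sheetDensity H s (‖ξ‖ ^ 2) : ℂ) +
        char (⟪ξ, space w⟫ + -timeCoord w * √(‖ξ‖ ^ 2 - s)) * (sheetDensity H s (‖ξ‖ ^ 2) : ℂ) := by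
      intro ξ
      rw [char_add, char_add]
      ring
    simp only [e]
    exact ((integrable_char_mul_iff (by fun_prop)).2 hD).add
      ((integrable_char_mul_iff (by fun_prop)).2 hD)
  obtain ⟨h1, h2⟩ := hc (space w) (fun p => (sheetDensity H s p : ℂ) *
    (char (timeCoord w * √(p - s)) + char (-timeCoord w * √(p - s)))) hint
  simp only [integral_sheetDensity, mul_left_comm _ (2 : ℂ)] at h1 h2
  refine ⟨(integrable_const_mul_iff two_ne_zero.isUnit _).1 h1, ?_⟩
  rw [h, h2, integral_const_mul, mul_assoc]

end Wave

end

section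

open scoped Topology NNReal ContDiff

namespace Wave

theorem posPow_nonneg (α y : ℝ) : 0 ≤ posPow α y := by
  unfold posPow; split_ifs with h
  · exact Real.rpow_nonneg h.le _
  · exact le_rfl

theorem posPow_of_nonpos (α : ℝ) {y : ℝ} (hy : y ≤ 0) : posPow α y = 0 := if_neg hy.not_gt

theorem posPow_of_pos (α : ℝ) {y : ℝ} (hy : 0 < y) : posPow α y = y ^ α := if_pos hy

theorem posPow_add_one (α y : ℝ) : posPow (α + 1) y = y * posPow α y := by
  unfold posPow; split_ifs with h
  · rw [Real.rpow_add_one h.ne', mul_comm]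
  · rw [mul_zero]

@[fun_prop] theorem measurable_posPow (α : ℝ) : Measurable (posPow α) :=
  Measurable.ite measurableSet_Ioi (by fun_prop) measurable_const

theorem continuous_posPow {α : ℝ} (hα : 0 < α) : Continuous (posPow α) := by
  have : posPow α = fun y => (max y 0) ^ α := by
    ext y; unfold posPow; split_ifs with h
    · rw [max_eq_left h.le]
    · rw [max_eq_right (not_lt.1 h), Real.zero_rpow hα.ne']
  rw [this]
  exact (continuous_id.max continuous_const).rpow_const fun _ => Or.inr hα.le

theorem hasDerivAt_posPow {α y : ℝ} (hy : y ≠ 0) :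
    HasDerivAt (posPow (α + 1)) ((α + 1) * posPow α y) y := by
  rcases hy.lt_or_gt with h | h
  · rw [posPow_of_nonpos α h.le, mul_zero]
    exact (hasDerivAt_const y (0 : ℝ)).congr_of_eventuallyEq
      ((eventually_lt_nhds h).mono fun z hz => posPow_of_nonpos _ hz.le)
  · rw [posPow_of_pos α h]
    have := Real.hasDerivAt_rpow_const (x := y) (p := α + 1) (Or.inl h.ne')
    rw [add_sub_cancel_right] at this
    exact this.congr_of_eventuallyEq ((eventually_gt_nhds h).mono fun z hz => posPow_of_pos _ hz)

theorem posPow_le {α : ℝ} (hα : 0 ≤ α) {y M : ℝ} (hM : 0 ≤ M) (hy : y ≤ M) :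
    posPow α y ≤ M ^ α := by
  unfold posPow; split_ifs with h
  · exact Real.rpow_le_rpow h.le hy hα
  · exact Real.rpow_nonneg hM _

/-- A common integrable majorant for `|τ| (τ² - κ)₊^α` on `[-2, 2]`. -/
theorem exists_majorant {α : ℝ} (hα : -1 < α) :
    ∃ C, 0 ≤ C ∧ ∀ κ : ℝ, |κ| ≤ 5 → ∃ h : ℝ → ℝ, Integrable h ∧ ∫ τ, h τ ≤ C ∧ (∀ τ, 0 ≤ h τ) ∧
      ∀ τ, |τ| ≤ 2 → |τ| * posPow α (τ ^ 2 - κ) ≤ h τ := by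
  set G : ℝ → ℝ := (Set.Ioc 0 9).indicator fun y => y ^ α with hG
  have hG0 : ∀ y, 0 ≤ G y := fun y => Set.indicator_nonneg (fun y hy => Real.rpow_nonneg hy.1.le _) y
  have hGi : Integrable G := by
    rw [hG, integrable_indicator_iff measurableSet_Ioc]
    exact (intervalIntegral.intervalIntegrable_rpow' hα (a := 0) (b := 9)).1
  refine ⟨∫ y, G y, integral_nonneg hG0, fun κ hκ => ?_⟩
  set k : ℝ → ℝ := (Set.Ioi 0).indicator fun τ => τ * G (τ ^ 2 - κ) with hk
  have hk0 : ∀ τ, 0 ≤ k τ :=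
    Set.indicator_nonneg fun τ hτ => mul_nonneg (le_of_lt hτ) (hG0 _)
  have hκi : Integrable fun v => G (v - κ) := hGi.comp_sub_right κ
  have hki : Integrable k := by
    rw [hk, integrable_indicator_iff measurableSet_Ioi]
    have := (integrableOn_Ioi_comp_rpow_iff' (fun v => G (v - κ)) two_ne_zero).2 hκi.integrableOn
    refine this.congr_fun (fun τ hτ => ?_) measurableSet_Ioi
    simp only [smul_eq_mul, Real.rpow_two]
    rw [show (2 : ℝ) - 1 = 1 by norm_num, Real.rpow_one]
  have hkint : 2 * ∫ τ, k τ ≤ ∫ y, G y := by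
    have h1 : 2 * ∫ τ, k τ = ∫ v in Set.Ioi (0 : ℝ), G (v - κ) := by
      rw [← integral_comp_rpow_Ioi _ (two_ne_zero (α := ℝ)), hk,
        integral_indicator measurableSet_Ioi, ← integral_const_mul]
      refine setIntegral_congr_fun measurableSet_Ioi fun τ hτ => ?_
      simp only [smul_eq_mul, Real.rpow_two]
      rw [show (2 : ℝ) - 1 = 1 by norm_num, Real.rpow_one, abs_two, mul_assoc]
    rw [h1, ← integral_sub_right_eq_self G κ]
    exact setIntegral_le_integral hκi (Eventually.of_forall fun v => hG0 _)
  refine ⟨fun τ => k τ + k (-τ), hki.add hki.comp_neg, ?_,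
    fun τ => add_nonneg (hk0 _) (hk0 _), fun τ hτ => ?_⟩
  · rw [integral_add hki hki.comp_neg, integral_neg_eq_self, ← two_mul]
    exact hkint
  · have h2 : posPow α (τ ^ 2 - κ) ≤ G (τ ^ 2 - κ) := by
      by_cases h : 0 < τ ^ 2 - κ
      · have : τ ^ 2 - κ ≤ 9 := by
          have := abs_le.1 hκ
          have := abs_le.1 hτ
          nlinarith
        rw [posPow_of_pos _ h, hG, Set.indicator_of_mem (show _ ∈ Set.Ioc (0 : ℝ) 9 from ⟨h, this⟩)]
      · rw [posPow_of_nonpos _ (not_lt.1 h)]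
        exact hG0 _
    have h3 : |τ| * G (τ ^ 2 - κ) ≤ k τ + k (-τ) := by
      rcases lt_trichotomy τ 0 with h | rfl | h
      · have : k (-τ) = |τ| * G (τ ^ 2 - κ) := by
          rw [hk, Set.indicator_of_mem (by simpa using h), abs_of_neg h, neg_sq]
        linarith [hk0 τ]
      · simpa using add_nonneg (hk0 0) (hk0 (-0))
      · have : k τ = |τ| * G (τ ^ 2 - κ) := by
          rw [hk, Set.indicator_of_mem (by simpa using h), abs_of_pos h]
        linarith [hk0 (-τ)]
    exact (mul_le_mul_of_nonneg_left h2 (abs_nonneg _)).trans h3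

/-- Smooth amplitudes `b(s,τ)`, supported in `τ ∈ [a, 2]` for `|s| < 1`. -/
structure Amplitude (a : ℝ) (b : ℝ × ℝ → ℝ) : Prop where
  contDiff : ContDiff ℝ ∞ b
  eq_zero : ∀ s ∈ Set.Ioo (-1 : ℝ) 1, ∀ τ ∉ Set.Icc a 2, b (s, τ) = 0

/-- The partial derivative in the first variable. -/
def dFst (b : ℝ × ℝ → ℝ) (p : ℝ × ℝ) : ℝ := fderiv ℝ b p (1, 0)

/-- The partial derivative in the second variable. -/
def dSnd (b : ℝ × ℝ → ℝ) (p : ℝ × ℝ) : ℝ := fderiv ℝ b p (0, 1)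

namespace Amplitude

variable {a : ℝ} {b : ℝ × ℝ → ℝ}

theorem continuous (hb : Amplitude a b) : Continuous b := hb.contDiff.continuous

theorem hasDerivAt_fst (hb : Amplitude a b) (s τ : ℝ) :
    HasDerivAt (fun s => b (s, τ)) (dFst b (s, τ)) s :=
  (hb.contDiff.differentiable (by simp) (s, τ)).hasFDerivAt.comp_hasDerivAt s
    ((hasDerivAt_id s).prodMk (hasDerivAt_const s τ))

theorem hasDerivAt_snd (hb : Amplitude a b) (s τ : ℝ) :
    HasDerivAt (fun τ => b (s, τ)) (dSnd b (s, τ)) τ :=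
  (hb.contDiff.differentiable (by simp) (s, τ)).hasFDerivAt.comp_hasDerivAt τ
    ((hasDerivAt_const τ s).prodMk (hasDerivAt_id τ))

theorem fderiv_apply (hb : Amplitude a b) (v : ℝ × ℝ) : Amplitude a fun p => fderiv ℝ b p v where
  contDiff := (hb.contDiff.fderiv_right (m := ∞) (by simp)).clm_apply contDiff_const
  eq_zero s hs τ hτ := by
    have : b =ᶠ[𝓝 (s, τ)] fun _ => 0 := by
      have ho : IsOpen (Set.Ioo (-1 : ℝ) 1 ×ˢ (Set.Icc a 2)ᶜ) :=
        isOpen_Ioo.prod isClosed_Icc.isOpen_compl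
      filter_upwards [ho.mem_nhds (show (s, τ) ∈ _ from ⟨hs, hτ⟩)] with p hp
      exact hb.eq_zero _ hp.1 _ hp.2
    rw [this.fderiv_eq]; simp

theorem dFst (hb : Amplitude a b) : Amplitude a (dFst b) := hb.fderiv_apply _

theorem dSnd (hb : Amplitude a b) : Amplitude a (dSnd b) := hb.fderiv_apply _

theorem mul_left (hb : Amplitude a b) {f : ℝ → ℝ} (hf : ContDiff ℝ ∞ f) :
    Amplitude a fun p => f p.2 * b p where
  contDiff := (hf.comp contDiff_snd).mul hb.contDiff
  eq_zero s hs τ hτ := by simp [hb.eq_zero s hs τ hτ]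

theorem exists_bound (hb : Amplitude a b) :
    ∃ M, 0 ≤ M ∧ ∀ s, |s| ≤ 1 / 10 → ∀ τ, |b (s, τ)| ≤ M := by
  obtain ⟨M, hM⟩ := ((isCompact_Icc (a := (-(1 / 10) : ℝ)) (b := 1 / 10)).prod
    (isCompact_Icc (a := a) (b := 2))).exists_bound_of_continuousOn hb.continuous.continuousOn
  refine ⟨|M|, abs_nonneg _, fun s hs τ => ?_⟩
  by_cases hτ : τ ∈ Set.Icc a 2
  · exact (hM (s, τ) ⟨abs_le.1 hs, hτ⟩).trans (le_abs_self _)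
  · have := abs_le.1 hs
    rw [hb.eq_zero s ⟨by linarith, by linarith⟩ τ hτ]; simp

end Amplitude

end Wave

end

section

open scoped Topology NNReal ContDiff

namespace Wave

/-- The oscillatory integral `∫ e^{2πitτ} b(s,τ) (τ² - κ)₊^α dτ`. -/
def osc (b : ℝ × ℝ → ℝ) (α s κ t : ℝ) : ℂ :=
  ∫ τ : ℝ, char (t * τ) * ((b (s, τ) * posPow α (τ ^ 2 - κ) : ℝ) : ℂ)

/-- Decay of order `β` of `osc b α`, uniformly over the relevant parameters. -/
def OscBound (b : ℝ × ℝ → ℝ) (α β : ℝ) : Prop :=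
  ∃ C, 0 ≤ C ∧ ∀ s κ : ℝ, |s| ≤ 1 / 10 → |κ| ≤ 5 → ∀ t, ‖osc b α s κ t‖ ≤ C * (1 + |t|) ^ (-β)

variable {a : ℝ} {b : ℝ × ℝ → ℝ}

theorem norm_osc_le (b : ℝ × ℝ → ℝ) (α s κ t : ℝ) :
    ‖osc b α s κ t‖ ≤ ∫ τ : ℝ, |b (s, τ) * posPow α (τ ^ 2 - κ)| :=
  (norm_integral_le_integral_norm _).trans_eq (by simp)

theorem integrable_char_osc {α s κ : ℝ}
    (h : Integrable fun τ : ℝ => b (s, τ) * posPow α (τ ^ 2 - κ)) (t : ℝ) :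
    Integrable fun τ : ℝ => char (t * τ) * ((b (s, τ) * posPow α (τ ^ 2 - κ) : ℝ) : ℂ) :=
  (integrable_char_mul_iff (by fun_prop)).2 h

namespace Amplitude

theorem abs_le_two (hb : Amplitude a b) (ha : -2 ≤ a) {s τ : ℝ} (hs : |s| ≤ 1 / 10)
    (h : b (s, τ) ≠ 0) : |τ| ≤ 2 := by
  have hs := abs_le.1 hs
  have : τ ∈ Set.Icc a 2 := by
    by_contra h'
    exact h (hb.eq_zero s ⟨by linarith, by linarith⟩ τ h')
  exact abs_le.2 ⟨ha.trans this.1, this.2⟩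

theorem aestronglyMeasurable (hb : Amplitude a b) (α s κ : ℝ) :
    AEStronglyMeasurable (fun τ : ℝ => b (s, τ) * posPow α (τ ^ 2 - κ)) := by
  have := hb.continuous
  exact ((by fun_prop : Continuous fun τ : ℝ => b (s, τ)).measurable.mul
    ((measurable_posPow α).comp (by fun_prop))).aestronglyMeasurable

theorem exists_integral_le (hb : Amplitude a b) (ha : -2 ≤ a) {α : ℝ} (hα : -1 < α)
    (h : 0 ≤ α ∨ ∃ M, ∀ s τ, |s| ≤ 1 / 10 → |b (s, τ)| ≤ M * |τ|) :
    ∃ C, 0 ≤ C ∧ ∀ s κ : ℝ, |s| ≤ 1 / 10 → |κ| ≤ 5 →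
      (Integrable fun τ : ℝ => b (s, τ) * posPow α (τ ^ 2 - κ)) ∧
      ∫ τ : ℝ, |b (s, τ) * posPow α (τ ^ 2 - κ)| ≤ C := by
  suffices ∃ C, 0 ≤ C ∧ ∀ s κ : ℝ, |s| ≤ 1 / 10 → |κ| ≤ 5 → ∃ g : ℝ → ℝ, Integrable g ∧
      ∫ τ, g τ ≤ C ∧ ∀ τ, |b (s, τ) * posPow α (τ ^ 2 - κ)| ≤ g τ by
    obtain ⟨C, hC, H⟩ := this
    refine ⟨C, hC, fun s κ hs hκ => ?_⟩
    obtain ⟨g, hg, hgC, hle⟩ := H s κ hs hκ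
    have hi := hg.mono' (hb.aestronglyMeasurable α s κ) (Eventually.of_forall hle)
    exact ⟨hi, (integral_mono hi.abs hg hle).trans hgC⟩
  rcases h with h | ⟨M, hM⟩
  · obtain ⟨M, hM0, hM⟩ := hb.exists_bound
    refine ⟨4 * (M * 9 ^ α), by positivity, fun s κ hs hκ =>
      ⟨(Set.Icc (-2) 2).indicator fun _ => M * 9 ^ α, ?_, ?_, fun τ => ?_⟩⟩
    · exact (integrable_indicator_iff measurableSet_Icc).2
        (integrableOn_const measure_Icc_lt_top.ne)
    · rw [integral_indicator measurableSet_Icc]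
      norm_num
    · by_cases h0 : b (s, τ) = 0
      · rw [h0, zero_mul, abs_zero]
        exact Set.indicator_nonneg (fun _ _ => by positivity) _
      · have h2 := abs_le.1 (hb.abs_le_two ha hs h0)
        have hκ := abs_le.1 hκ
        rw [Set.indicator_of_mem (show τ ∈ Set.Icc (-2 : ℝ) 2 from h2), abs_mul,
          abs_of_nonneg (posPow_nonneg _ _)]
        exact mul_le_mul (hM s hs τ) (posPow_le h (by norm_num) (by nlinarith))
          (posPow_nonneg _ _) hM0
  · obtain ⟨C, hC, H⟩ := exists_majorant hα
    refine ⟨|M| * C, by positivity, fun s κ hs hκ => ?_⟩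
    obtain ⟨g, hg, hgC, hg0, hle⟩ := H κ hκ
    refine ⟨fun τ => |M| * g τ, hg.const_mul _, ?_, fun τ => ?_⟩
    · rw [integral_const_mul]
      gcongr
    · by_cases h0 : b (s, τ) = 0
      · rw [h0, zero_mul, abs_zero]
        exact mul_nonneg (abs_nonneg _) (hg0 τ)
      · rw [abs_mul, abs_of_nonneg (posPow_nonneg _ _)]
        calc |b (s, τ)| * posPow α (τ ^ 2 - κ) ≤ |M| * |τ| * posPow α (τ ^ 2 - κ) := by
              gcongr
              · exact posPow_nonneg _ _
              · exact (hM s τ hs).trans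
                  (mul_le_mul_of_nonneg_right (le_abs_self _) (abs_nonneg _))
          _ ≤ |M| * g τ := by
              rw [mul_assoc]
              gcongr
              exact hle τ (hb.abs_le_two ha hs h0)

theorem exists_bound_mul_abs (hb : Amplitude a b) (ha : 0 < a) :
    ∃ M, ∀ s τ, |s| ≤ 1 / 10 → |b (s, τ)| ≤ M * |τ| := by
  obtain ⟨M, hM0, hM⟩ := hb.exists_bound
  refine ⟨M / a, fun s τ hs => ?_⟩
  have hs' := abs_le.1 hs
  by_cases hτ : τ ∈ Set.Icc a 2
  · calc |b (s, τ)| ≤ M := hM s hs τ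
      _ = M / a * a := by field_simp
      _ ≤ _ := by gcongr; exact hτ.1.trans (le_abs_self _)
  · rw [hb.eq_zero s ⟨by linarith, by linarith⟩ τ hτ, abs_zero]
    positivity

/-- Integration by parts in `τ`. -/
theorem osc_add_one (hb : Amplitude a b) (ha : -2 ≤ a) {α : ℝ} (hα : -1 < α) {s κ : ℝ}
    (hs : |s| ≤ 1 / 10) (hκ : |κ| ≤ 5) (t : ℝ) :
    2 * π * Complex.I * t * osc b (α + 1) s κ t =
      -osc (Wave.dSnd b) (α + 1) s κ t - 2 * (α + 1) * osc (fun p => p.2 * b p) α s κ t := by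
  obtain ⟨M, -, hM⟩ := hb.exists_bound
  obtain ⟨_, -, h0⟩ := hb.exists_integral_le ha (α := α + 1) (by linarith) (Or.inl (by linarith))
  obtain ⟨_, -, h1⟩ := hb.dSnd.exists_integral_le ha (α := α + 1) (by linarith)
    (Or.inl (by linarith))
  obtain ⟨_, -, h2⟩ := (hb.mul_left contDiff_id).exists_integral_le ha hα
    (Or.inr ⟨M, fun s τ hs => by
      rw [abs_mul, mul_comm]; exact mul_le_mul_of_nonneg_right (hM s hs τ) (abs_nonneg _)⟩)
  have i0 := integrable_char_osc (h0 s κ hs hκ).1 t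
  have i1 := integrable_char_osc (h1 s κ hs hκ).1 t
  have i2 := integrable_char_osc (b := fun p => p.2 * b p) (h2 s κ hs hκ).1 t
  set f : ℝ → ℂ := fun τ => char (t * τ) * ((b (s, τ) * posPow (α + 1) (τ ^ 2 - κ) : ℝ) : ℂ) with hf
  set f' : ℝ → ℂ := fun τ => 2 * π * Complex.I * t * f τ +
    char (t * τ) * ((Wave.dSnd b (s, τ) * posPow (α + 1) (τ ^ 2 - κ) : ℝ) : ℂ) +
    2 * (α + 1) * (char (t * τ) * ((τ * b (s, τ) * posPow α (τ ^ 2 - κ) : ℝ) : ℂ)) with hf'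
  have hfi : Integrable f' := ((i0.const_mul _).add i1).add (i2.const_mul _)
  have hderiv : ∀ τ ∈ {τ : ℝ | τ ^ 2 = κ}ᶜ, HasDerivAt f (f' τ) τ := by
    intro τ hτ
    have d1 : HasDerivAt (fun τ => char (t * τ)) (2 * π * Complex.I * char (t * τ) * t) τ := by
      have := (hasDerivAt_char (t * τ)).scomp τ ((hasDerivAt_id τ).const_mul t)
      simpa [Function.comp_def, mul_comm] using this
    have d2 : HasDerivAt (fun τ : ℝ => posPow (α + 1) (τ ^ 2 - κ))
        ((α + 1) * posPow α (τ ^ 2 - κ) * (2 * τ)) τ := by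
      have := (hasDerivAt_posPow (α := α) (sub_ne_zero.2 hτ)).comp τ
        (((hasDerivAt_id τ).pow 2).sub_const κ)
      simpa [Function.comp_def] using this
    refine (d1.mul ((hb.hasDerivAt_snd s τ).mul d2).ofReal_comp).congr_deriv ?_
    simp only [hf', hf, Pi.mul_apply]
    push_cast
    ring
  have hzero : ∀ τ, 2 < |τ| → b (s, τ) = 0 ∧ Wave.dSnd b (s, τ) = 0 := fun τ hτ =>
    ⟨by_contra fun h => (hb.abs_le_two ha hs h).not_gt hτ,
      by_contra fun h => (hb.dSnd.abs_le_two ha hs h).not_gt hτ⟩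
  have hf0 : ∀ τ, 2 < |τ| → f τ = 0 := fun τ hτ => by simp [hf, (hzero τ hτ).1]
  have hsupp : Function.support f' ⊆ Set.Ioc (-3) 3 := by
    intro τ hτ
    have h : |τ| ≤ 2 := by
      by_contra! h
      exact hτ (by simp [hf', hf0 τ h, hzero τ h])
    have := abs_le.1 h
    exact ⟨by linarith, by linarith⟩
  have hcount : {τ : ℝ | τ ^ 2 = κ}.Countable := by
    refine Set.Countable.mono (s₂ := {√κ, -√κ}) (fun τ hτ => ?_) (by simp)
    have hτ : τ ^ 2 = κ := hτ
    rw [← hτ, Real.sqrt_sq_eq_abs]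
    rcases abs_choice τ with h | h <;> simp [h]
  have hfc : Continuous f := by
    have := hb.continuous
    have := continuous_posPow (α := α + 1) (by linarith)
    fun_prop
  have key : ∫ τ, f' τ = 0 := by
    rw [← intervalIntegral.integral_eq_integral_of_support_subset hsupp,
      integral_eq_of_hasDerivAt_off_countable f f' hcount hfc.continuousOn
        (fun τ hτ => hderiv τ hτ.2) hfi.intervalIntegrable,
      hf0 3 (by norm_num), hf0 (-3) (by norm_num), sub_zero]
  have e1 : ∫ τ, f' τ = _ :=
    integral_add ((i0.const_mul (2 * π * Complex.I * t)).add i1) (i2.const_mul (2 * (α + 1)))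
  have e2 := integral_add (i0.const_mul (2 * π * Complex.I * t)) i1
  rw [key, e2, integral_const_mul, integral_const_mul] at e1
  simp only [osc]
  linear_combination -e1

end Amplitude

end Wave

end

section

open scoped Topology NNReal ContDiff

namespace Wave

variable {a : ℝ} {b : ℝ × ℝ → ℝ}

theorem OscBound.mono {α β β' : ℝ} (h : OscBound b α β) (hβ : β' ≤ β) : OscBound b α β' := by
  obtain ⟨C, hC, H⟩ := h
  refine ⟨C, hC, fun s κ hs hκ t => (H s κ hs hκ t).trans ?_⟩
  gcongr
  linarith [abs_nonneg t]

theorem oscBound_of_mul_abs {α β : ℝ} (hβ : 0 ≤ β) (h0 : OscBound b α 0)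
    (h : ∃ C, 0 ≤ C ∧ ∀ s κ : ℝ, |s| ≤ 1 / 10 → |κ| ≤ 5 → ∀ t,
      |t| * ‖osc b α s κ t‖ ≤ C * (1 + |t|) ^ (-β)) :
    OscBound b α (β + 1) := by
  obtain ⟨A, hA, H0⟩ := h0
  obtain ⟨B, hB, H⟩ := h
  refine ⟨A * 2 ^ (β + 1) + 2 * B, by positivity, fun s κ hs hκ t => ?_⟩
  have ht : 0 ≤ |t| := abs_nonneg t
  have h0 := H0 s κ hs hκ t
  have h1 := H s κ hs hκ t
  rw [neg_zero, Real.rpow_zero, mul_one] at h0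
  have e : (1 + |t|) ^ (-(β + 1)) = (1 + |t|) ^ (-β) / (1 + |t|) := by
    rw [neg_add, Real.rpow_add (by positivity), Real.rpow_neg_one, div_eq_mul_inv]
  rcases le_total |t| 1 with h | h
  · have h2 : 1 ≤ (2 : ℝ) ^ (β + 1) * (1 + |t|) ^ (-(β + 1)) := by
      rw [Real.rpow_neg (by positivity), ← div_eq_mul_inv, one_le_div (by positivity)]
      gcongr
      linarith
    calc _ ≤ A := h0
      _ ≤ A * ((2 : ℝ) ^ (β + 1) * (1 + |t|) ^ (-(β + 1))) := le_mul_of_one_le_right hA h2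
      _ ≤ _ := by
        rw [← mul_assoc]
        gcongr
        linarith
  · have h2 : ‖osc b α s κ t‖ * (1 + |t|) ≤ 2 * B * (1 + |t|) ^ (-β) := by
      nlinarith [norm_nonneg (osc b α s κ t)]
    rw [← le_div_iff₀ (by positivity)] at h2
    refine h2.trans ?_
    rw [mul_div_assoc, ← e]
    gcongr
    have : 0 ≤ A * 2 ^ (β + 1) := by positivity
    linarith

namespace Amplitude

theorem oscBound_zero (hb : Amplitude a b) (ha : -2 ≤ a) {α : ℝ} (hα : -1 < α)
    (h : 0 ≤ α ∨ ∃ M, ∀ s τ, |s| ≤ 1 / 10 → |b (s, τ)| ≤ M * |τ|) : OscBound b α 0 := by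
  obtain ⟨C, hC, H⟩ := hb.exists_integral_le ha hα h
  refine ⟨C, hC, fun s κ hs hκ t => ?_⟩
  rw [neg_zero, Real.rpow_zero, mul_one]
  exact (norm_osc_le _ _ _ _ _).trans (H s κ hs hκ).2

theorem oscBound_add_one (hb : Amplitude a b) (ha : -2 ≤ a) {α β : ℝ} (hα : -1 < α) (hβ : 0 ≤ β)
    (h1 : OscBound (Wave.dSnd b) (α + 1) β) (h2 : OscBound (fun p => p.2 * b p) α β) :
    OscBound b (α + 1) (β + 1) := by
  refine oscBound_of_mul_abs hβ (hb.oscBound_zero ha (by linarith) (Or.inl (by linarith))) ?_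
  obtain ⟨C₁, hC₁, H₁⟩ := h1
  obtain ⟨C₂, hC₂, H₂⟩ := h2
  refine ⟨C₁ + 2 * (α + 1) * C₂, by nlinarith, fun s κ hs hκ t => ?_⟩
  have key := congrArg norm (hb.osc_add_one ha hα hs hκ t)
  rw [norm_mul, norm_mul, norm_mul, norm_mul, Complex.norm_I, Complex.norm_real, Complex.norm_real,
    Complex.norm_ofNat, Real.norm_eq_abs, Real.norm_eq_abs, abs_of_pos pi_pos] at key
  have h3 : ‖-osc (Wave.dSnd b) (α + 1) s κ t -
      2 * (α + 1) * osc (fun p => p.2 * b p) α s κ t‖ ≤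
      (C₁ + 2 * (α + 1) * C₂) * (1 + |t|) ^ (-β) := by
    refine (norm_sub_le _ _).trans ?_
    have e : ‖(2 * (α + 1) : ℂ)‖ = 2 * (α + 1) := by
      rw [show (2 * (α + 1) : ℂ) = ((2 * (α + 1) : ℝ) : ℂ) by push_cast; ring, Complex.norm_real,
        Real.norm_of_nonneg (by linarith)]
    rw [norm_neg, norm_mul, e, add_mul, mul_assoc _ C₂]
    gcongr
    · exact H₁ s κ hs hκ t
    · linarith
    · exact H₂ s κ hs hκ t
  have h4 : 0 ≤ |t| * ‖osc b (α + 1) s κ t‖ := by positivity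
  nlinarith [pi_gt_three]

theorem bound_or (hb : Amplitude a b) {α : ℝ} (h : 0 ≤ α ∨ 0 < a) :
    0 ≤ α ∨ ∃ M, ∀ s τ, |s| ≤ 1 / 10 → |b (s, τ)| ≤ M * |τ| :=
  h.imp_right hb.exists_bound_mul_abs

theorem osc_add_one_eq (hb : Amplitude a b) (ha : -2 ≤ a) {α : ℝ} (hα : -1 < α)
    (h : 0 ≤ α ∨ 0 < a) {s κ : ℝ} (hs : |s| ≤ 1 / 10) (hκ : |κ| ≤ 5) (t : ℝ) :
    osc b (α + 1) s κ t = osc (fun p => p.2 ^ 2 * b p) α s κ t - κ * osc b α s κ t := by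
  have hb' : Amplitude a fun p => p.2 ^ 2 * b p := hb.mul_left (contDiff_id.pow 2)
  obtain ⟨_, -, h1⟩ := hb.exists_integral_le ha hα (hb.bound_or h)
  obtain ⟨_, -, h2⟩ := hb'.exists_integral_le ha hα (hb'.bound_or h)
  rw [osc, osc, osc, ← integral_const_mul, ← integral_sub
    (integrable_char_osc (b := fun p => p.2 ^ 2 * b p) (h2 s κ hs hκ).1 t)
    ((integrable_char_osc (h1 s κ hs hκ).1 t).const_mul _)]
  congr 1
  ext τ
  rw [posPow_add_one]
  push_cast
  ring

/-- Decay of `osc` improves by one order when `α` increases by one. -/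
theorem oscBound_add_nat (ha : -2 ≤ a) {α β : ℝ} (hα : -1 < α) (h : 0 ≤ α ∨ 0 < a) (hβ : 0 ≤ β)
    (H : ∀ b, Amplitude a b → OscBound b α β) (j : ℕ) :
    ∀ b, Amplitude a b → OscBound b (α + j) (β + j) := by
  induction j with
  | zero => simpa using H
  | succ j ih =>
    intro b hb
    have hj : (0 : ℝ) ≤ j := j.cast_nonneg
    have hα' : -1 < α + j := by linarith
    have h' : 0 ≤ α + j ∨ 0 < a := h.imp_left fun h => by linarith
    have := hb.oscBound_add_one ha hα' (add_nonneg hβ hj) ?_ (ih _ (hb.mul_left contDiff_id))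
    · simpa [add_assoc] using this
    · obtain ⟨C₁, hC₁, H₁⟩ := ih _ hb.dSnd
      obtain ⟨C₂, hC₂, H₂⟩ := ih _ (hb.dSnd.mul_left (contDiff_id.pow 2))
      refine ⟨C₂ + 5 * C₁, by positivity, fun s κ hs hκ t => ?_⟩
      rw [hb.dSnd.osc_add_one_eq ha hα' h' hs hκ]
      refine (norm_sub_le _ _).trans ?_
      rw [norm_mul, Complex.norm_real, Real.norm_eq_abs, add_mul, mul_assoc]
      gcongr
      · exact H₂ s κ hs hκ t
      · exact H₁ s κ hs hκ t

theorem oscBound_half (hb : Amplitude a b) (ha : -2 ≤ a) : OscBound b (1 / 2) (1 / 2) := by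
  obtain ⟨M, -, hM⟩ := hb.exists_bound
  have h := hb.oscBound_add_one ha (α := -(1 / 2)) (β := 0) (by norm_num) le_rfl
    (hb.dSnd.oscBound_zero ha (by norm_num) (Or.inl (by norm_num)))
    ((hb.mul_left contDiff_id).oscBound_zero ha (by norm_num) (Or.inr ⟨M, fun s τ hs => by
      rw [abs_mul, mul_comm]; exact mul_le_mul_of_nonneg_right (hM s hs τ) (abs_nonneg _)⟩))
  norm_num at h
  exact h.mono (by norm_num)

theorem exists_half_nat {k : ℕ} (hk : 2 ≤ k) :
    ∃ j : ℕ, ((k : ℝ) - 2) / 2 = j ∨ ((k : ℝ) - 2) / 2 = 1 / 2 + j := by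
  obtain ⟨k, rfl⟩ := Nat.exists_eq_add_of_le hk
  obtain ⟨j, rfl | rfl⟩ := k.even_or_odd'
  · exact ⟨j, Or.inl (by push_cast; ring)⟩
  · exact ⟨j, Or.inr (by push_cast; ring)⟩

/-- Decay of `osc` for amplitudes whose support may contain `τ = 0`. -/
theorem oscBound_self (hb : Amplitude a b) (ha : -2 ≤ a) {k : ℕ} (hk : 2 ≤ k) :
    OscBound b (((k : ℝ) - 2) / 2) (((k : ℝ) - 2) / 2) := by
  obtain ⟨j, hj | hj⟩ := exists_half_nat hk
  · have := oscBound_add_nat (a := a) ha (α := 0) (β := 0) (by norm_num) (Or.inl le_rfl) le_rfl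
      (fun b hb => hb.oscBound_zero ha (by norm_num) (Or.inl le_rfl)) j b hb
    rwa [hj, ← zero_add (j : ℝ)]
  · rw [hj]
    exact oscBound_add_nat (a := a) ha (by norm_num) (Or.inl (by norm_num)) (by norm_num)
      (fun b hb => hb.oscBound_half ha) j b hb

end Amplitude

end Wave

end

section

open scoped Topology NNReal ContDiff

namespace Wave

/-- A van der Corput type estimate for a function with an integrable power singularity. -/
theorem norm_integral_char_mul_le {α M k t : ℝ} (hα : -1 < α) (hα0 : α ≤ 0) {f f' : ℝ → ℝ}
    (hM : 0 ≤ M) (hk : 0 ≤ k) (hk3 : k ≤ 3) (ht : 1 ≤ |t|)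
    (hd : ∀ τ, k < τ → HasDerivAt f (f' τ) τ) (hc : ContinuousOn f' (Set.Ioi k))
    (hf : ∀ τ, k < τ → τ ≤ 4 → |f τ| ≤ M * (τ - k) ^ α)
    (hf' : ∀ τ, k < τ → τ ≤ 4 → |f' τ| ≤ M * ((τ - k) ^ α - α * (τ - k) ^ (α - 1)))
    (hz : ∀ τ, τ ≤ k → f τ = 0) (hz' : ∀ τ, 4 ≤ τ → f τ = 0) (hi : Integrable f) :
    ‖∫ τ, char (t * τ) * (f τ : ℂ)‖ ≤ M * (1 / (α + 1) + 2 + 4 ^ (α + 1) / (α + 1)) *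
      |t| ^ (-(α + 1)) := by
  have ht0 : 0 < |t| := one_pos.trans_le ht
  have hα1 : 0 < α + 1 := by linarith
  set h : ℝ := |t|⁻¹ with hh
  have h0 : 0 < h := inv_pos.2 ht0
  have h1 : h ≤ 1 := inv_le_one_of_one_le₀ ht
  have hpow : |t| ^ (-(α + 1)) = h ^ (α + 1) := by
    rw [hh, Real.inv_rpow ht0.le, Real.rpow_neg ht0.le]
  set g : ℝ → ℂ := fun τ => char (t * τ) * (f τ : ℂ) with hg
  have hgi : Integrable g := (integrable_char_mul_iff (by fun_prop)).2 hi
  have hsplit : ∫ τ, g τ = (∫ τ in k..(k + h), g τ) + ∫ τ in (k + h)..4, g τ := by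
    rw [intervalIntegral.integral_add_adjacent_intervals hgi.intervalIntegrable
      hgi.intervalIntegrable, intervalIntegral.integral_eq_integral_of_support_subset]
    intro τ hτ
    refine ⟨not_le.1 fun h' => hτ ?_, (not_le.1 fun h' => hτ ?_).le⟩
    · simp [hg, hz τ h']
    · simp [hg, hz' τ h']
  have hgn : ∀ τ, ‖g τ‖ = |f τ| := fun τ => by simp [hg]
  have hpart1 : ‖∫ τ in k..(k + h), g τ‖ ≤ M * (h ^ (α + 1) / (α + 1)) := by
    have hint : IntervalIntegrable (fun y : ℝ => M * y ^ α) volume 0 h :=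
      (intervalIntegral.intervalIntegrable_rpow' hα).const_mul M
    have hint' := hint.comp_sub_right k
    rw [zero_add, add_comm h] at hint'
    refine (intervalIntegral.norm_integral_le_of_norm_le (by linarith)
      (Eventually.of_forall fun τ hτ => (hgn τ).trans_le (hf τ hτ.1 (hτ.2.trans (by linarith))))
      hint').trans_eq ?_
    rw [intervalIntegral.integral_comp_sub_right (fun y => M * y ^ α), sub_self,
      add_sub_cancel_left, intervalIntegral.integral_const_mul, integral_rpow (Or.inl hα),
      Real.zero_rpow hα1.ne', sub_zero]
  have hpos : ∀ τ ∈ Set.Icc (k + h) 4, k < τ := fun τ hτ => by linarith [hτ.1]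
  have hle : k + h ≤ 4 := by linarith
  set g' : ℝ → ℂ := fun τ => char (t * τ) * (f' τ : ℂ) with hg'
  have hg'c : ContinuousOn g' (Set.uIcc (k + h) 4) := by
    rw [Set.uIcc_of_le hle]
    exact (by fun_prop : Continuous fun τ : ℝ => char (t * τ)).continuousOn.mul
      (Complex.continuous_ofReal.comp_continuousOn (hc.mono hpos))
  have hFTC : 2 * π * Complex.I * t * (∫ τ in (k + h)..4, g τ) =
      -g (k + h) - ∫ τ in (k + h)..4, g' τ := by
    have hderiv : ∀ τ ∈ Set.uIcc (k + h) 4,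
        HasDerivAt g (2 * π * Complex.I * t * g τ + g' τ) τ := by
      intro τ hτ
      rw [Set.uIcc_of_le hle] at hτ
      have d1 : HasDerivAt (fun τ => char (t * τ)) (2 * π * Complex.I * char (t * τ) * t) τ := by
        have := (hasDerivAt_char (t * τ)).scomp τ ((hasDerivAt_id τ).const_mul t)
        simpa [Function.comp_def, mul_comm] using this
      refine (d1.mul (hd τ (hpos τ hτ)).ofReal_comp).congr_deriv ?_
      simp only [hg, hg']
      ring
    have := intervalIntegral.integral_eq_sub_of_hasDerivAt hderiv
      ((hgi.intervalIntegrable.const_mul _).add hg'c.intervalIntegrable)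
    rw [intervalIntegral.integral_add (hgi.intervalIntegrable.const_mul _)
      hg'c.intervalIntegrable, intervalIntegral.integral_const_mul] at this
    have e4 : g 4 = 0 := by simp [hg, hz' 4 le_rfl]
    rw [e4] at this
    linear_combination this
  have hbd : ‖g (k + h)‖ ≤ M * h ^ α := by
    rw [hgn]
    simpa using hf (k + h) (by linarith) hle
  have hg'bd : ‖∫ τ in (k + h)..4, g' τ‖ ≤ M * (4 ^ (α + 1) / (α + 1) + h ^ α) := by
    have hderiv : ∀ τ ∈ Set.uIcc (k + h) 4, HasDerivAt
        (fun τ => M * ((τ - k) ^ (α + 1) / (α + 1) - (τ - k) ^ α))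
        (M * ((τ - k) ^ α - α * (τ - k) ^ (α - 1))) τ := by
      intro τ hτ
      rw [Set.uIcc_of_le hle] at hτ
      have hτ' : τ - k ≠ 0 := (sub_pos.2 (hpos τ hτ)).ne'
      have d0 : HasDerivAt (fun τ => τ - k) 1 τ := (hasDerivAt_id τ).sub_const k
      have d1 := (d0.rpow_const (p := α + 1) (Or.inl hτ')).div_const (α + 1)
      have d2 := d0.rpow_const (p := α) (Or.inl hτ')
      refine ((d1.sub d2).const_mul M).congr_deriv ?_
      rw [add_sub_cancel_right]
      field_simp
    have hci : IntervalIntegrable (fun τ => M * ((τ - k) ^ α - α * (τ - k) ^ (α - 1)))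
        volume (k + h) 4 := by
      refine ContinuousOn.intervalIntegrable ?_
      rw [Set.uIcc_of_le hle]
      have hne : ∀ τ ∈ Set.Icc (k + h) 4, τ - k ≠ 0 ∨ 0 ≤ (0 : ℝ) := fun τ hτ =>
        Or.inl (sub_pos.2 (hpos τ hτ)).ne'
      have hcs : ContinuousOn (fun τ => τ - k) (Set.Icc (k + h) 4) := by fun_prop
      refine continuousOn_const.mul ((hcs.rpow_const fun τ hτ => Or.inl
        (sub_pos.2 (hpos τ hτ)).ne').sub (continuousOn_const.mul (hcs.rpow_const fun τ hτ => Or.inl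
        (sub_pos.2 (hpos τ hτ)).ne')))
    refine (intervalIntegral.norm_integral_le_of_norm_le hle
      (Eventually.of_forall fun τ hτ => ?_) hci).trans ?_
    · rw [hg', norm_mul, norm_char, one_mul, Complex.norm_real]
      exact hf' τ (hpos τ ⟨hτ.1.le, hτ.2⟩) hτ.2
    · rw [intervalIntegral.integral_eq_sub_of_hasDerivAt hderiv hci, ← mul_sub, add_sub_cancel_left]
      have p1 : (4 - k) ^ (α + 1) ≤ (4 : ℝ) ^ (α + 1) := by
        apply Real.rpow_le_rpow <;> linarith
      have p2 : (4 - k) ^ (α + 1) / (α + 1) ≤ (4 : ℝ) ^ (α + 1) / (α + 1) := by gcongr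
      have p3 : 0 ≤ (4 - k) ^ α := Real.rpow_nonneg (by linarith) _
      have p4 : 0 ≤ h ^ (α + 1) / (α + 1) := by positivity
      gcongr
      linarith
  have hone : 1 ≤ h ^ α := Real.one_le_rpow_of_pos_of_le_one_of_nonpos h0 h1 hα0
  have hh1 : h * h ^ α = h ^ (α + 1) := by rw [Real.rpow_add_one h0.ne', mul_comm]
  have hpart2 : ‖∫ τ in (k + h)..4, g τ‖ ≤ M * (2 + 4 ^ (α + 1) / (α + 1)) * h ^ (α + 1) := by
    have hn := congrArg norm hFTC
    rw [norm_mul, norm_mul, norm_mul, norm_mul, Complex.norm_I, Complex.norm_real,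
      Complex.norm_real, Complex.norm_ofNat, Real.norm_eq_abs, Real.norm_eq_abs,
      abs_of_pos pi_pos] at hn
    have hn2 := (norm_sub_le (-g (k + h)) (∫ τ in (k + h)..4, g' τ))
    rw [norm_neg] at hn2
    have q : 0 ≤ |t| * ‖∫ τ in (k + h)..4, g τ‖ := by positivity
    have q1 : |t| * ‖∫ τ in (k + h)..4, g τ‖ ≤
        M * (2 + 4 ^ (α + 1) / (α + 1)) * h ^ α := by
      have q2 : 4 ^ (α + 1) / (α + 1) ≤ 4 ^ (α + 1) / (α + 1) * h ^ α :=
        le_mul_of_one_le_right (by positivity) hone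
      have q3 := mul_le_mul_of_nonneg_left q2 hM
      nlinarith [pi_gt_three]
    calc _ = h * (|t| * ‖∫ τ in (k + h)..4, g τ‖) := by rw [hh]; field_simp
      _ ≤ h * (M * (2 + 4 ^ (α + 1) / (α + 1)) * h ^ α) := by gcongr
      _ = _ := by rw [← hh1]; ring
  rw [hsplit, hpow]
  refine (norm_add_le _ _).trans ((add_le_add hpart1 hpart2).trans_eq ?_)
  ring

end Wave

end

section

open scoped Topology NNReal ContDiff

namespace Wave

namespace Amplitude

variable {a : ℝ} {b : ℝ × ℝ → ℝ}

theorem exists_norm_osc_le (hb : Amplitude a b) (ha : 0 < a) (ha2 : a ≤ 2) {α : ℝ} (hα : -1 < α)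
    (hα0 : α ≤ 0) : ∃ C, 0 ≤ C ∧ ∀ s κ : ℝ, |s| ≤ 1 / 10 → |κ| ≤ 5 → ∀ t, 1 ≤ |t| →
      ‖osc b α s κ t‖ ≤ C * |t| ^ (-(α + 1)) := by
  obtain ⟨M₀, hM₀, hb0⟩ := hb.exists_bound
  obtain ⟨M₁, hM₁, hb1⟩ := hb.dSnd.exists_bound
  obtain ⟨_, -, hI⟩ := hb.exists_integral_le (by linarith) hα (Or.inr (hb.exists_bound_mul_abs ha))
  have hα1 : 0 < α + 1 := by linarith
  set M := (M₀ + M₁) * a ^ α + 8 * M₀ * a ^ (α - 1) with hM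
  have hM0 : 0 ≤ M := by positivity
  refine ⟨M * (1 / (α + 1) + 2 + 4 ^ (α + 1) / (α + 1)), by positivity, fun s κ hs hκ t ht => ?_⟩
  have hs' := abs_le.1 hs
  have hκ' := abs_le.1 hκ
  set k : ℝ := max (√(max κ 0)) (a / 2) with hk
  have hk1 : √(max κ 0) ≤ k := le_max_left _ _
  have hk2 : a / 2 ≤ k := le_max_right _ _
  have hk0 : 0 < k := by linarith
  have hkκ : κ ≤ k ^ 2 := (le_max_left κ 0).trans (Real.sqrt_le_left hk0.le |>.1 hk1)
  have hk3 : k ≤ 3 := max_le (Real.sqrt_le_iff.2 ⟨by norm_num, max_le (by linarith) (by norm_num)⟩)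
    (by linarith)
  have hy : ∀ τ, k < τ → a * (τ - k) ≤ τ ^ 2 - κ := fun τ hτ => by nlinarith
  have hy0 : ∀ τ, k < τ → 0 < a * (τ - k) := fun τ hτ => mul_pos ha (sub_pos.2 hτ)
  have hpow : ∀ τ, k < τ → ∀ β : ℝ, β ≤ 0 → (τ ^ 2 - κ) ^ β ≤ a ^ β * (τ - k) ^ β := fun τ hτ β hβ => by
    rw [← Real.mul_rpow ha.le (sub_pos.2 hτ).le]
    exact Real.rpow_le_rpow_of_nonpos (hy0 τ hτ) (hy τ hτ) hβ
  have hpos : ∀ τ, k < τ → 0 < τ ^ 2 - κ := fun τ hτ => (hy0 τ hτ).trans_le (hy τ hτ)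
  refine norm_integral_char_mul_le hα hα0 (M := M) (k := k)
    (f' := fun τ => Wave.dSnd b (s, τ) * (τ ^ 2 - κ) ^ α +
      b (s, τ) * (2 * τ * α * (τ ^ 2 - κ) ^ (α - 1))) hM0 hk0.le hk3 ht
    (fun τ hτ => ?_) ?_ (fun τ hτ _ => ?_) (fun τ hτ h4 => ?_) (fun τ hτ => ?_) (fun τ hτ => ?_)
    (hI s κ hs hκ).1
  · have d := ((((hasDerivAt_id τ).pow 2).sub_const κ).rpow_const (p := α)
      (Or.inl (hpos τ hτ).ne'))
    refine ((hb.hasDerivAt_snd s τ).mul (d.congr_of_eventuallyEq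
      ((eventually_gt_nhds hτ).mono fun z hz => posPow_of_pos _ (hpos z hz)))).congr_deriv ?_
    simp [posPow_of_pos _ (hpos τ hτ)]
  · have h1 := hb.continuous
    have h2 := hb.dSnd.continuous
    have hp : ∀ β : ℝ, ContinuousOn (fun τ : ℝ => (τ ^ 2 - κ) ^ β) (Set.Ioi k) := fun β =>
      (by fun_prop : Continuous fun τ : ℝ => τ ^ 2 - κ).continuousOn.rpow_const
        fun τ hτ => Or.inl (hpos τ hτ).ne'
    have hp1 := hp α
    have hp2 := hp (α - 1)
    fun_prop
  · rw [abs_mul, posPow_of_pos _ (hpos τ hτ), abs_of_nonneg (Real.rpow_nonneg (hpos τ hτ).le _)]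
    have h1 := mul_le_mul (hb0 s hs τ) (hpow τ hτ α hα0) (Real.rpow_nonneg (hpos τ hτ).le _) hM₀
    refine h1.trans ?_
    rw [← mul_assoc]
    have := Real.rpow_nonneg (sub_pos.2 hτ).le α
    gcongr
    rw [hM]
    have : 0 ≤ M₁ * a ^ α + 8 * M₀ * a ^ (α - 1) := by positivity
    linarith
  · have x0 := Real.rpow_nonneg (sub_pos.2 hτ).le α
    have x1 := Real.rpow_nonneg (sub_pos.2 hτ).le (α - 1)
    have h1 := mul_le_mul (hb1 s hs τ) (hpow τ hτ α hα0) (Real.rpow_nonneg (hpos τ hτ).le _) hM₁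
    have h2 := mul_le_mul (hb0 s hs τ) (hpow τ hτ (α - 1) (by linarith))
      (Real.rpow_nonneg (hpos τ hτ).le _) hM₀
    have h3 : |Wave.dSnd b (s, τ) * (τ ^ 2 - κ) ^ α| ≤ M₁ * (a ^ α * (τ - k) ^ α) := by
      rwa [abs_mul, abs_of_nonneg (Real.rpow_nonneg (hpos τ hτ).le _)]
    have h4 : |b (s, τ) * (2 * τ * α * (τ ^ 2 - κ) ^ (α - 1))| ≤
        8 * -α * (M₀ * (a ^ (α - 1) * (τ - k) ^ (α - 1))) := by
      have e : |2 * τ * α| ≤ 8 * -α := by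
        rw [abs_mul, abs_of_nonpos hα0, abs_of_pos (by linarith)]
        have : 0 ≤ -α := by linarith
        gcongr
        linarith
      calc _ = |2 * τ * α| * (|b (s, τ)| * (τ ^ 2 - κ) ^ (α - 1)) := by
            rw [abs_mul, abs_mul, abs_of_nonneg (Real.rpow_nonneg (hpos τ hτ).le (α - 1))]
            ring
        _ ≤ _ := mul_le_mul e h2 (mul_nonneg (abs_nonneg _) (Real.rpow_nonneg (hpos τ hτ).le _))
            (by linarith)
    refine (abs_add_le _ _).trans ((add_le_add h3 h4).trans ?_)
    have y0 : 0 ≤ M₀ * a ^ α * (τ - k) ^ α := by positivity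
    have y1 : 0 ≤ 8 * M₀ * a ^ (α - 1) * (τ - k) ^ α := by positivity
    have y2 : 0 ≤ (M₀ + M₁) * a ^ α * (-α * (τ - k) ^ (α - 1)) :=
      mul_nonneg (by positivity) (mul_nonneg (by linarith) x1)
    rw [hM]
    linarith
  · rcases le_or_gt τ (a / 2) with h | h
    · rw [hb.eq_zero s ⟨by linarith, by linarith⟩ τ fun h' => by linarith [h'.1], zero_mul]
    · have h1 : τ ≤ √(max κ 0) := by
        rcases le_max_iff.1 hτ with h' | h'
        · exact h'
        · linarith
      have h2 : τ ^ 2 ≤ max κ 0 := (Real.le_sqrt' (by linarith)).1 h1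
      have h3 : τ ^ 2 ≤ κ := (le_max_iff.1 h2).resolve_right (by nlinarith)
      rw [posPow_of_nonpos _ (by linarith), mul_zero]
  · rw [hb.eq_zero s ⟨by linarith, by linarith⟩ τ fun h' => by linarith [h'.2], zero_mul]

theorem oscBound_of_nonpos (hb : Amplitude a b) (ha : 0 < a) (ha2 : a ≤ 2) {α : ℝ} (hα : -1 < α)
    (hα0 : α ≤ 0) : OscBound b α (α + 1) := by
  obtain ⟨A, hA, H0⟩ := hb.oscBound_zero (by linarith) hα (Or.inr (hb.exists_bound_mul_abs ha))
  obtain ⟨B, hB, H1⟩ := hb.exists_norm_osc_le ha ha2 hα hα0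
  refine ⟨(A + B) * 2 ^ (α + 1), by positivity, fun s κ hs hκ t => ?_⟩
  have ht : 0 ≤ |t| := abs_nonneg t
  have hα1 : 0 < α + 1 := by linarith
  have h0 := H0 s κ hs hκ t
  rw [neg_zero, Real.rpow_zero, mul_one] at h0
  rw [mul_assoc]
  rcases le_total |t| 1 with h | h
  · have h2 : 1 ≤ (2 : ℝ) ^ (α + 1) * (1 + |t|) ^ (-(α + 1)) := by
      rw [Real.rpow_neg (by positivity), ← div_eq_mul_inv, one_le_div (by positivity)]
      gcongr
      linarith
    calc _ ≤ A := h0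
      _ ≤ A + B := by linarith
      _ ≤ _ := le_mul_of_one_le_right (by positivity) h2
  · have h2 : |t| ^ (-(α + 1)) ≤ (2 : ℝ) ^ (α + 1) * (1 + |t|) ^ (-(α + 1)) := by
      have : 0 < |t| := by linarith
      rw [Real.rpow_neg (by positivity), Real.rpow_neg (by positivity), ← div_eq_mul_inv,
        ← Real.div_rpow (by norm_num) (by positivity), ← Real.inv_rpow (by positivity)]
      gcongr
      rw [inv_eq_one_div, div_le_div_iff₀ (by positivity) (by positivity)]
      linarith
    calc _ ≤ B * |t| ^ (-(α + 1)) := H1 s κ hs hκ t h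
      _ ≤ (A + B) * |t| ^ (-(α + 1)) := by gcongr; linarith
      _ ≤ _ := by gcongr

/-- Decay of `osc` for amplitudes supported away from `τ = 0`. -/
theorem oscBound_succ (hb : Amplitude a b) (ha : 0 < a) (ha2 : a ≤ 2) {k : ℕ} (hk : 2 ≤ k) :
    OscBound b (((k : ℝ) - 2) / 2) (((k : ℝ) - 2) / 2 + 1) := by
  obtain ⟨j, hj | hj⟩ := exists_half_nat hk
  · have := oscBound_add_nat (a := a) (by linarith) (α := 0) (β := 1) (by norm_num) (Or.inl le_rfl)
      zero_le_one (fun b hb => by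
        simpa using hb.oscBound_of_nonpos ha ha2 (α := 0) (by norm_num) le_rfl) j b hb
    rwa [zero_add, add_comm 1, ← hj] at this
  · have := oscBound_add_nat (a := a) (by linarith) (α := -(1 / 2)) (β := 1 / 2) (by norm_num)
      (Or.inr ha) (by norm_num) (fun b hb =>
        (hb.oscBound_of_nonpos ha ha2 (α := -(1 / 2)) (by norm_num) (by norm_num)).mono
          (by norm_num)) (j + 1) b hb
    rw [hj]
    convert this using 1 <;> push_cast <;> ring

end Amplitude

end Wave

end

section

open scoped Topology NNReal ContDiff

namespace Wave

theorem hasDerivAt_posPow_of_pos {α : ℝ} (hα : 0 < α) (y : ℝ) :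
    HasDerivAt (posPow (α + 1)) ((α + 1) * posPow α y) y := by
  by_cases hy : y = 0
  · subst hy
    exact hasDerivAt_of_hasDerivAt_of_ne (g := fun y => (α + 1) * posPow α y)
      (fun y hy => hasDerivAt_posPow hy) (continuous_posPow (by linarith)).continuousAt
      ((continuous_posPow hα).const_mul _).continuousAt
  · exact hasDerivAt_posPow hy

/-- A second symmetric difference is controlled by the second derivative. -/
theorem norm_second_difference_le {f f₁ f₂ : ℝ → ℂ} {δ B : ℝ}
    (h₁ : ∀ s, |s| < δ → HasDerivAt f (f₁ s) s) (h₂ : ∀ s, |s| < δ → HasDerivAt f₁ (f₂ s) s)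
    (hB : ∀ s, |s| < δ → ‖f₂ s‖ ≤ B) {s : ℝ} (hs : |s| < δ) :
    ‖f s + f (-s) - 2 * f 0‖ ≤ 2 * B * s ^ 2 := by
  have hB0 : 0 ≤ B := (norm_nonneg _).trans (hB s hs)
  have hconv : Convex ℝ {x : ℝ | |x| ≤ |s|} := by
    have : {x : ℝ | |x| ≤ |s|} = Set.Icc (-|s|) |s| := by ext; simp [abs_le]
    rw [this]; exact convex_Icc _ _
  have hlt : ∀ x ∈ {x : ℝ | |x| ≤ |s|}, |x| < δ := fun x hx => lt_of_le_of_lt hx hs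
  have hneg : ∀ x : ℝ, HasDerivAt (fun x : ℝ => -x) (-1) x := fun x => (hasDerivAt_id x).neg
  have d1 : ∀ x ∈ {x : ℝ | |x| ≤ |s|}, ‖f₁ x - f₁ (-x)‖ ≤ 2 * B * |s| := by
    intro x hx
    have := hconv.norm_image_sub_le_of_norm_hasDerivWithin_le
      (fun y hy => (h₂ y (hlt y hy)).hasDerivWithinAt) (fun y hy => hB y (hlt y hy))
      (show -x ∈ _ by simpa using hx) hx
    refine this.trans ?_
    have e : ‖x - -x‖ = 2 * |x| := by
      rw [sub_neg_eq_add, ← two_mul, norm_mul, Real.norm_eq_abs, Real.norm_eq_abs, abs_two]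
    rw [e]
    have hx : |x| ≤ |s| := hx
    nlinarith
  have := hconv.norm_image_sub_le_of_norm_hasDerivWithin_le
    (f := fun x => f x + f (-x)) (f' := fun x => f₁ x - f₁ (-x))
    (fun y hy => by
      have := (h₁ y (hlt y hy)).add
        ((h₁ (-y) (by rw [abs_neg]; exact hlt y hy)).scomp y (hneg y))
      exact (this.congr_deriv (by simp [sub_eq_add_neg])).hasDerivWithinAt) d1
    (show (0 : ℝ) ∈ _ by simp) (show |s| ≤ |s| from le_rfl)
  simp only [neg_zero, sub_zero, ← two_mul, Real.norm_eq_abs] at this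
  rwa [mul_assoc, ← sq, sq_abs] at this

/-- The bound `O(s² (1 + |t|) ^ γ)` for second differences of `s ↦ osc b α s (u² - s) t`. -/
def SecondDiffBound (b : ℝ × ℝ → ℝ) (α γ : ℝ) : Prop :=
  ∃ C, 0 ≤ C ∧ ∀ u s : ℝ, |u| ≤ 1 → |s| < 1 / 10 → ∀ t,
    ‖osc b α s (u ^ 2 - s) t + osc b α (-s) (u ^ 2 - -s) t - 2 * osc b α 0 (u ^ 2 - 0) t‖ ≤
      C * s ^ 2 * (1 + |t|) ^ γ

theorem abs_sq_sub_le {u s : ℝ} (hu : |u| ≤ 1) (hs : |s| ≤ 1 / 10) : |u ^ 2 - s| ≤ 5 := by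
  have := abs_le.1 hu
  have := abs_le.1 hs
  exact abs_le.2 ⟨by nlinarith, by nlinarith⟩

namespace Amplitude

variable {a : ℝ} {b : ℝ × ℝ → ℝ}

theorem hasDerivAt_osc (hb : Amplitude a b) (ha : -2 ≤ a) {α : ℝ} (hα : 0 < α) {u s : ℝ}
    (hu : |u| ≤ 1) (hs : |s| < 1 / 10) (t : ℝ) :
    HasDerivAt (fun s => osc b (α + 1) s (u ^ 2 - s) t)
      (osc (Wave.dFst b) (α + 1) s (u ^ 2 - s) t +
        (α + 1 : ℝ) * osc b α s (u ^ 2 - s) t) s := by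
  obtain ⟨M₀, hM₀, hb0⟩ := hb.exists_bound
  obtain ⟨M₁, hM₁, hb1⟩ := hb.dFst.exists_bound
  obtain ⟨_, -, hI⟩ := hb.exists_integral_le ha (α := α + 1) (by linarith) (Or.inl (by linarith))
  obtain ⟨_, -, hI0⟩ := hb.exists_integral_le ha (α := α) (by linarith) (Or.inl hα.le)
  obtain ⟨_, -, hI1⟩ := hb.dFst.exists_integral_le ha (α := α + 1) (by linarith)
    (Or.inl (by linarith))
  have hκ : ∀ {s : ℝ}, |s| ≤ 1 / 10 → |u ^ 2 - s| ≤ 5 := abs_sq_sub_le hu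
  have i0 := integrable_char_osc (hI0 s _ hs.le (hκ hs.le)).1 t
  have i1 := integrable_char_osc (hI1 s _ hs.le (hκ hs.le)).1 t
  have hU : Set.Ioo (-(1 / 10) : ℝ) (1 / 10) ∈ 𝓝 s := Ioo_mem_nhds (abs_lt.1 hs).1 (abs_lt.1 hs).2
  set F' : ℝ → ℝ → ℂ := fun s τ =>
    char (t * τ) * ((Wave.dFst b (s, τ) * posPow (α + 1) (τ ^ 2 - (u ^ 2 - s)) : ℝ) : ℂ) +
      (α + 1 : ℝ) * (char (t * τ) * ((b (s, τ) * posPow α (τ ^ 2 - (u ^ 2 - s)) : ℝ) : ℂ))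
    with hF'
  have hF'i : Integrable (F' s) := i1.add (i0.const_mul _)
  have key := hasDerivAt_integral_of_dominated_loc_of_deriv_le (μ := volume) (x₀ := s)
    (F := fun s τ => char (t * τ) * ((b (s, τ) * posPow (α + 1) (τ ^ 2 - (u ^ 2 - s)) : ℝ) : ℂ))
    (F' := F') (bound := (Set.Icc (-2) 2).indicator fun _ =>
      M₁ * 9 ^ (α + 1) + (α + 1) * (M₀ * 9 ^ α)) hU ?_ ?_ hF'i.aestronglyMeasurable ?_ ?_ ?_
  · refine key.2.congr_deriv ?_
    rw [hF', integral_add i1 (i0.const_mul _), integral_const_mul]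
    rfl
  · filter_upwards [hU] with s hs
    have hs : |s| ≤ 1 / 10 := (abs_lt.2 hs).le
    exact (integrable_char_osc (hI s _ hs (hκ hs)).1 t).aestronglyMeasurable
  · exact integrable_char_osc (hI s _ hs.le (hκ hs.le)).1 t
  · refine Eventually.of_forall fun τ s hs => ?_
    have hs : |s| ≤ 1 / 10 := (abs_lt.2 hs).le
    by_cases hτ : |τ| ≤ 2
    · have hτ' := abs_le.1 hτ
      have hs' := abs_le.1 hs
      have hy : τ ^ 2 - (u ^ 2 - s) ≤ 9 := by nlinarith
      rw [Set.indicator_of_mem (show τ ∈ Set.Icc (-2 : ℝ) 2 from hτ')]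
      refine (norm_add_le _ _).trans ?_
      rw [norm_mul, norm_mul, norm_mul, norm_char, one_mul, one_mul, Complex.norm_real,
        Complex.norm_real, Complex.norm_real, norm_mul, norm_mul, Real.norm_eq_abs,
        Real.norm_eq_abs, Real.norm_eq_abs, Real.norm_eq_abs, Real.norm_eq_abs,
        abs_of_nonneg (posPow_nonneg _ _), abs_of_nonneg (posPow_nonneg _ _),
        abs_of_pos (show 0 < α + 1 by linarith)]
      have p1 := posPow_le (α := α + 1) (by linarith) (by norm_num) hy
      have p0 := posPow_le hα.le (by norm_num) hy
      have q1 := posPow_nonneg (α + 1) (τ ^ 2 - (u ^ 2 - s))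
      have q0 := posPow_nonneg α (τ ^ 2 - (u ^ 2 - s))
      gcongr
      · exact hb1 s hs τ
      · exact hb0 s hs τ
    · have z0 : b (s, τ) = 0 := by_contra fun h => hτ (hb.abs_le_two ha hs h)
      have z1 : Wave.dFst b (s, τ) = 0 := by_contra fun h => hτ (hb.dFst.abs_le_two ha hs h)
      simp only [hF', z0, z1, zero_mul, Complex.ofReal_zero, mul_zero, add_zero, norm_zero]
      exact Set.indicator_nonneg (fun _ _ => by positivity) _
  · exact (integrable_indicator_iff measurableSet_Icc).2
      (integrableOn_const measure_Icc_lt_top.ne)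
  · refine Eventually.of_forall fun τ s _ => ?_
    have d : HasDerivAt (fun s : ℝ => posPow (α + 1) (τ ^ 2 - (u ^ 2 - s)))
        ((α + 1) * posPow α (τ ^ 2 - (u ^ 2 - s))) s := by
      have := (hasDerivAt_posPow_of_pos hα (τ ^ 2 - (u ^ 2 - s))).comp s
        (((hasDerivAt_id s).const_sub (u ^ 2)).const_sub (τ ^ 2))
      simpa [Function.comp_def] using this
    refine (((hb.hasDerivAt_fst s τ).mul d).ofReal_comp.const_mul (char (t * τ))).congr_deriv ?_
    simp only [hF']
    push_cast
    ring

theorem secondDiffBound_of_oscBound (hb : Amplitude a b) (ha : -2 ≤ a) {α β : ℝ} (hα : 0 < α)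
    (H : ∀ b, Amplitude a b → OscBound b α β)
    (H1 : ∀ b, Amplitude a b → OscBound b (α + 1) β)
    (H2 : ∀ b, Amplitude a b → OscBound b (α + 1 + 1) β) :
    SecondDiffBound b (α + 1 + 1) (-β) := by
  obtain ⟨C₀, hC₀, h₀⟩ := H _ hb
  obtain ⟨C₁, hC₁, h₁⟩ := H1 _ hb.dFst
  obtain ⟨C₂, hC₂, h₂⟩ := H2 _ hb.dFst.dFst
  refine ⟨2 * (C₂ + (α + 1 + 1) * C₁ + (α + 1 + 1) * (C₁ + (α + 1) * C₀)), by positivity,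
    fun u s hu hs t => ?_⟩
  refine (norm_second_difference_le (δ := 1 / 10)
    (B := (C₂ + (α + 1 + 1) * C₁ + (α + 1 + 1) * (C₁ + (α + 1) * C₀)) * (1 + |t|) ^ (-β))
    (fun s hs => hb.hasDerivAt_osc ha (α := α + 1) (by linarith) hu hs t)
    (fun s hs => (hb.dFst.hasDerivAt_osc ha (α := α + 1) (by linarith) hu hs t).add
      ((hb.hasDerivAt_osc ha hα hu hs t).const_mul _)) (fun s hs => ?_) hs).trans_eq (by ring)
  have n0 := h₀ s _ hs.le (abs_sq_sub_le hu hs.le) t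
  have n1 := h₁ s _ hs.le (abs_sq_sub_le hu hs.le) t
  have n2 := h₂ s _ hs.le (abs_sq_sub_le hu hs.le) t
  have e1 : ‖((α + 1 : ℝ) : ℂ)‖ = α + 1 := by
    rw [Complex.norm_real, Real.norm_of_nonneg (by linarith)]
  have e2 : ‖((α + 1 + 1 : ℝ) : ℂ)‖ = α + 1 + 1 := by
    rw [Complex.norm_real, Real.norm_of_nonneg (by linarith)]
  calc _ ≤ C₂ * (1 + |t|) ^ (-β) + (α + 1 + 1) * (C₁ * (1 + |t|) ^ (-β)) +
        (α + 1 + 1) * (C₁ * (1 + |t|) ^ (-β) + (α + 1) * (C₀ * (1 + |t|) ^ (-β))) := by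
        refine norm_add_le_of_le (norm_add_le_of_le n2 ?_) ?_
        · rw [norm_mul, e2]; gcongr
        · rw [norm_mul, e2]
          gcongr
          refine norm_add_le_of_le n1 ?_
          rw [norm_mul, e1]
          gcongr
    _ = _ := by ring

theorem exists_smooth_inv {a : ℝ} (ha : 0 < a) :
    ∃ θ : ℝ → ℝ, ContDiff ℝ ∞ θ ∧ ∀ τ, a ≤ τ → θ τ * τ = 1 := by
  set ψ : ℝ → ℝ := fun τ => Real.smoothTransition (2 * τ / a - 1) with hψ
  have hψc : ContDiff ℝ ∞ ψ := Real.smoothTransition.contDiff.comp (by fun_prop)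
  have hpos : ∀ τ, 0 < ψ τ * τ + (1 - ψ τ) := by
    intro τ
    have h0 : 0 ≤ ψ τ := Real.smoothTransition.nonneg _
    have h1 : ψ τ ≤ 1 := Real.smoothTransition.le_one _
    rcases le_or_gt τ 0 with h | h
    · have : ψ τ = 0 := Real.smoothTransition.zero_of_nonpos (by
        have : 2 * τ / a ≤ 0 := div_nonpos_of_nonpos_of_nonneg (by linarith) ha.le
        linarith)
      simp [this]
    · rcases h0.eq_or_lt with h' | h'
      · simp [← h']
      · have := mul_pos h' h
        linarith
  refine ⟨fun τ => (ψ τ * τ + (1 - ψ τ))⁻¹,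
    ((hψc.mul contDiff_id).add (contDiff_const.sub hψc)).inv fun τ => (hpos τ).ne',
    fun τ hτ => ?_⟩
  have : ψ τ = 1 := Real.smoothTransition.one_of_one_le (by
    have : 2 ≤ 2 * τ / a := by rw [le_div_iff₀ ha]; linarith
    linarith)
  have h0 : τ ≠ 0 := by linarith
  simp [this, h0]

theorem exists_osc_eq (hb : Amplitude a b) (ha : 0 < a) {α : ℝ} (hα : -1 < α) :
    ∃ c, Amplitude a c ∧ ∀ s κ t : ℝ, |s| ≤ 1 / 10 → |κ| ≤ 5 →
      osc b α s κ t = -(2 * π * Complex.I * t * osc c (α + 1) s κ t) -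
        osc (Wave.dSnd c) (α + 1) s κ t := by
  obtain ⟨θ, hθ, hθ1⟩ := exists_smooth_inv ha
  have hc : Amplitude a fun p => θ p.2 / (2 * (α + 1)) * b p :=
    hb.mul_left (f := fun τ => θ τ / (2 * (α + 1))) (hθ.div_const _)
  refine ⟨_, hc, fun s κ t hs hκ => ?_⟩
  rw [hc.osc_add_one (by linarith) hα hs hκ]
  have : osc b α s κ t =
      2 * (α + 1) * osc (fun p => p.2 * (θ p.2 / (2 * (α + 1)) * b p)) α s κ t := by
    rw [osc, osc, ← integral_const_mul]
    congr 1
    ext τ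
    by_cases hτ : τ ∈ Set.Icc a 2
    · have h1 := hθ1 τ hτ.1
      have h2 : τ * (θ τ / (2 * (α + 1)) * b (s, τ)) = b (s, τ) / (2 * (α + 1)) := by
        linear_combination b (s, τ) / (2 * (α + 1)) * h1
      rw [h2]
      have : (α + 1 : ℂ) ≠ 0 := by
        rw [← Complex.ofReal_one, ← Complex.ofReal_add]
        exact Complex.ofReal_ne_zero.2 (by linarith)
      push_cast
      field_simp
    · have hs := abs_le.1 hs
      simp [hb.eq_zero s ⟨by linarith, by linarith⟩ τ hτ]
  rw [this]
  ring

theorem secondDiffBound_of_add_one (hb : Amplitude a b) (ha : 0 < a) {α γ : ℝ}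
    (hα : -1 < α) (H : ∀ b, Amplitude a b → SecondDiffBound b (α + 1) γ) :
    SecondDiffBound b α (γ + 1) := by
  obtain ⟨c, hc, h⟩ := hb.exists_osc_eq ha hα
  obtain ⟨C₁, hC₁, h₁⟩ := H _ hc
  obtain ⟨C₂, hC₂, h₂⟩ := H _ hc.dSnd
  refine ⟨2 * π * C₁ + C₂, by positivity, fun u s hu hs t => ?_⟩
  have hs' : |-s| ≤ 1 / 10 := by rw [abs_neg]; exact hs.le
  have h0' : |(0 : ℝ)| ≤ 1 / 10 := by norm_num
  rw [h s _ t hs.le (abs_sq_sub_le hu hs.le), h (-s) _ t hs' (abs_sq_sub_le hu hs'),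
    h 0 _ t h0' (abs_sq_sub_le hu h0')]
  have n1 := h₁ u s hu hs t
  have n2 := h₂ u s hu hs t
  have ht : 0 ≤ |t| := abs_nonneg t
  set X := osc c (α + 1) s (u ^ 2 - s) t + osc c (α + 1) (-s) (u ^ 2 - -s) t -
    2 * osc c (α + 1) 0 (u ^ 2 - 0) t with hX
  set Y := osc (Wave.dSnd c) (α + 1) s (u ^ 2 - s) t +
    osc (Wave.dSnd c) (α + 1) (-s) (u ^ 2 - -s) t -
    2 * osc (Wave.dSnd c) (α + 1) 0 (u ^ 2 - 0) t with hY
  calc _ = ‖2 * π * Complex.I * t * X + Y‖ := by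
        rw [← norm_neg]
        congr 1
        rw [hX, hY]
        ring
    _ ≤ 2 * π * |t| * ‖X‖ + ‖Y‖ := by
        refine (norm_add_le _ _).trans_eq ?_
        rw [norm_mul, norm_mul, norm_mul, norm_mul, Complex.norm_I, Complex.norm_real,
          Complex.norm_real, Complex.norm_ofNat, Real.norm_eq_abs, Real.norm_eq_abs,
          abs_of_pos pi_pos, mul_one]
    _ ≤ 2 * π * (1 + |t|) * (C₁ * s ^ 2 * (1 + |t|) ^ γ) +
        (1 + |t|) * (C₂ * s ^ 2 * (1 + |t|) ^ γ) := by
        have : ‖Y‖ ≤ (1 + |t|) * ‖Y‖ := le_mul_of_one_le_left (norm_nonneg _) (by linarith)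
        refine add_le_add ?_ (this.trans ?_)
        · gcongr; linarith
        · gcongr
    _ = _ := by
        rw [Real.rpow_add_one (by positivity)]
        ring

theorem secondDiffBound (hb : Amplitude a b) (ha : 0 < a) (ha2 : a ≤ 2) {k : ℕ} (hk : 3 ≤ k) :
    SecondDiffBound b (((k : ℝ) - 2) / 2) (1 - ((k : ℝ) - 2) / 2) := by
  have hk' : (3 : ℝ) ≤ k := by exact_mod_cast hk
  set α := ((k : ℝ) - 2) / 2 with hα
  have hb0 : ∀ b, Amplitude a b → OscBound b α (α + 1) := fun b hb =>
    hb.oscBound_succ ha ha2 (by lia)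
  have hb1 : ∀ b, Amplitude a b → OscBound b (α + 1) (α + 1) := fun b hb => by
    have := hb.oscBound_succ ha ha2 (k := k + 2) (by lia)
    push_cast at this
    rw [show ((k : ℝ) + 2 - 2) / 2 = α + 1 by rw [hα]; ring] at this
    exact this.mono (by linarith)
  have hb2 : ∀ b, Amplitude a b → OscBound b (α + 1 + 1) (α + 1) := fun b hb => by
    have := hb.oscBound_succ ha ha2 (k := k + 4) (by lia)
    push_cast at this
    rw [show ((k : ℝ) + 4 - 2) / 2 = α + 1 + 1 by rw [hα]; ring] at this
    exact this.mono (by linarith)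
  have := hb.secondDiffBound_of_add_one ha (α := α) (γ := -(α + 1) + 1) (by linarith)
    fun b hb => hb.secondDiffBound_of_add_one ha (by linarith)
      fun b hb => hb.secondDiffBound_of_oscBound (by linarith) (by linarith) hb0 hb1 hb2
  rwa [show -(α + 1) + 1 + 1 = 1 - α by ring] at this

end Amplitude

end Wave

end

section

open scoped Topology NNReal ContDiff

namespace Wave

/-- Smooth radial profiles supported in `[1/16, 25/16]`. -/
structure Profile (H : ℝ → ℝ) : Prop where
  contDiff : ContDiff ℝ ∞ H
  mem_of_ne_zero : ∀ v, H v ≠ 0 → 1 / 16 ≤ v ∧ v ≤ 25 / 16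

theorem exists_profile {m : ℕ} {η : Spacetime m → ℝ} (hsm : ContDiff ℝ ∞ η)
    (hrad : ∀ z z' : Spacetime m, ‖z‖ = ‖z'‖ → η z = η z')
    (hsupp : ∀ z : Spacetime m, η z ≠ 0 → 1 / 4 ≤ ‖z‖ ∧ ‖z‖ ≤ 5 / 4) :
    ∃ H, Profile H ∧ ∀ z, ‖z‖ * η z = H (‖z‖ ^ 2) := by
  obtain ⟨e, he⟩ := exists_norm_eq (Spacetime m) zero_le_one
  have hn : ∀ v : ℝ, ‖√v • e‖ = √v := fun v => by
    rw [norm_smul, he, mul_one, Real.norm_of_nonneg (Real.sqrt_nonneg _)]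
  have hmem : ∀ v : ℝ, √v * η (√v • e) ≠ 0 → 1 / 16 ≤ v ∧ v ≤ 25 / 16 := by
    intro v hv
    have h := hsupp _ (right_ne_zero_of_mul hv)
    rw [hn] at h
    have hv0 : 0 < v := Real.sqrt_pos.1 (by linarith)
    have := Real.sq_sqrt hv0.le
    constructor <;> nlinarith
  refine ⟨fun v => √v * η (√v • e), ⟨contDiff_iff_contDiffAt.2 fun v => ?_, hmem⟩, fun z => ?_⟩
  · rcases lt_or_ge v (1 / 16) with h | h
    · refine contDiffAt_const (c := (0 : ℝ)) |>.congr_of_eventuallyEq ?_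
      filter_upwards [eventually_lt_nhds h] with x hx
      by_contra h'
      linarith [(hmem x h').1]
    · have hs : ContDiffAt ℝ ∞ (fun v : ℝ => √v) v := Real.contDiffAt_sqrt (by linarith)
      exact hs.mul (hsm.contDiffAt.comp v (hs.smul contDiffAt_const))
  · simp only [Real.sqrt_sq (norm_nonneg z)]
    rw [hrad z (‖z‖ • e) (by rw [norm_smul, he, norm_norm, mul_one])]

namespace Profile

variable {H : ℝ → ℝ}

theorem eq_zero (hH : Profile H) {v : ℝ} (hv : v < 1 / 16 ∨ 25 / 16 < v) : H v = 0 := by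
  by_contra h
  have := hH.mem_of_ne_zero v h
  rcases hv with hv | hv <;> linarith

theorem amplitude (hH : Profile H) : Amplitude (-2) fun p => H (2 * p.2 ^ 2 + p.1) where
  contDiff := hH.contDiff.comp (by fun_prop)
  eq_zero s hs τ hτ := by
    refine hH.eq_zero (Or.inr ?_)
    have : 4 < τ ^ 2 := by
      by_contra! h
      exact hτ ⟨by nlinarith, by nlinarith⟩
    linarith [hs.1]

/-- The part of the amplitude on `τ > 0`, cut off near `τ = 0`. -/
def cutoff (H : ℝ → ℝ) (p : ℝ × ℝ) : ℝ :=
  Real.smoothTransition (20 * p.2 - 2) * H (2 * p.2 ^ 2 + p.1)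

theorem amplitude_cutoff (hH : Profile H) : Amplitude (1 / 10) (cutoff H) where
  contDiff := (Real.smoothTransition.contDiff.comp (by fun_prop)).mul hH.amplitude.contDiff
  eq_zero s hs τ hτ := by
    rcases lt_or_ge τ (1 / 10) with h | h
    · rw [cutoff, Real.smoothTransition.zero_of_nonpos (by linarith), zero_mul]
    · have : τ ∉ Set.Icc (-2 : ℝ) 2 := fun h' => hτ ⟨h, h'.2⟩
      rw [cutoff, hH.amplitude.eq_zero s hs τ this, mul_zero]

theorem cutoff_eq (hH : Profile H) {s τ : ℝ} (hs : |s| ≤ 1 / 64) (hτ : 0 < τ) :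
    cutoff H (s, τ) = H (2 * τ ^ 2 + s) := by
  have := abs_le.1 hs
  rcases le_or_gt (3 / 20) τ with h | h
  · rw [cutoff, Real.smoothTransition.one_of_one_le (by linarith), one_mul]
  · rw [cutoff, hH.eq_zero (Or.inl (by nlinarith)), mul_zero]

theorem slice_eq_zero (hH : Profile H) (α : ℝ) {u s : ℝ} (hs : |s| ≤ 1 / 10) (hu : 1 < |u|)
    (t : ℝ) : slice H α s (u ^ 2 - s) t = 0 := by
  have hs := abs_le.1 hs
  have hu : 1 < u ^ 2 := by rwa [one_lt_sq_iff_one_lt_abs]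
  have : ∀ τ : ℝ, H (2 * τ ^ 2 + s) * posPow α (τ ^ 2 - (u ^ 2 - s)) = 0 := fun τ => by
    rcases le_or_gt (τ ^ 2) (u ^ 2 - s) with h | h
    · rw [posPow_of_nonpos _ (by linarith), mul_zero]
    · rw [hH.eq_zero (Or.inr (by linarith)), zero_mul]
  simp [slice, this]

theorem slice_eq_osc (hH : Profile H) {α : ℝ} (hα : 0 ≤ α) {s κ : ℝ} (hs : |s| ≤ 1 / 10)
    (hκ : |κ| ≤ 5) (t : ℝ) :
    slice H α s κ t = osc (fun p => H (2 * p.2 ^ 2 + p.1)) α s κ t := by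
  obtain ⟨_, -, hI⟩ := hH.amplitude.exists_integral_le le_rfl (α := α) (by linarith) (Or.inl hα)
  have hi := integrable_char_osc (b := fun p => H (2 * p.2 ^ 2 + p.1)) (hI s κ hs hκ).1 t
  have hi' := hi.comp_neg
  have e : ∫ τ in Set.Iic (0 : ℝ), char (t * τ) *
      ((H (2 * τ ^ 2 + s) * posPow α (τ ^ 2 - κ) : ℝ) : ℂ) = ∫ τ in Set.Ioi (0 : ℝ),
        char (t * -τ) * ((H (2 * (-τ) ^ 2 + s) * posPow α ((-τ) ^ 2 - κ) : ℝ) : ℂ) := by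
    rw [integral_comp_neg_Ioi 0 fun τ => char (t * τ) *
      ((H (2 * τ ^ 2 + s) * posPow α (τ ^ 2 - κ) : ℝ) : ℂ), neg_zero]
  rw [osc, ← intervalIntegral.integral_Iic_add_Ioi (b := 0) hi.integrableOn hi.integrableOn, e,
    ← integral_add hi'.integrableOn hi.integrableOn, slice]
  congr 1
  ext τ
  simp only [neg_sq, neg_mul, mul_neg]
  ring

theorem slice_eq_osc_cutoff (hH : Profile H) {α : ℝ} (hα : 0 ≤ α) {s κ : ℝ} (hs : |s| ≤ 1 / 64)
    (hκ : |κ| ≤ 5) (t : ℝ) :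
    slice H α s κ t = osc (cutoff H) α s κ t + osc (cutoff H) α s κ (-t) := by
  have hs' : |s| ≤ 1 / 10 := hs.trans (by norm_num)
  have hs1 := abs_le.1 hs'
  obtain ⟨_, -, hI⟩ := hH.amplitude_cutoff.exists_integral_le (by norm_num) (α := α)
    (by linarith) (Or.inl hα)
  have hi := fun t => integrable_char_osc (hI s κ hs' hκ).1 t
  have e : ∀ t, osc (cutoff H) α s κ t = ∫ τ in Set.Ioi (0 : ℝ),
      char (t * τ) * ((cutoff H (s, τ) * posPow α (τ ^ 2 - κ) : ℝ) : ℂ) := fun t => by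
    refine (setIntegral_eq_integral_of_forall_compl_eq_zero fun τ hτ => ?_).symm
    have hτ : τ ≤ 0 := not_lt.1 hτ
    rw [hH.amplitude_cutoff.eq_zero s ⟨by linarith, by linarith⟩ τ fun h => by linarith [h.1]]
    simp
  rw [e, e, ← integral_add (hi t).integrableOn (hi (-t)).integrableOn, slice]
  refine setIntegral_congr_fun measurableSet_Ioi fun τ hτ => ?_
  simp only [hH.cutoff_eq hs hτ]
  ring

theorem exists_norm_slice_le (hH : Profile H) {k : ℕ} (hk : 2 ≤ k) :
    ∃ C, 0 ≤ C ∧ ∀ s κ : ℝ, |s| ≤ 1 / 10 → |κ| ≤ 5 → ∀ t,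
      ‖slice H (((k : ℝ) - 2) / 2) s κ t‖ ≤ C * (1 + |t|) ^ (-(((k : ℝ) - 2) / 2)) := by
  have hk' : (2 : ℝ) ≤ k := by exact_mod_cast hk
  obtain ⟨C, hC, h⟩ := hH.amplitude.oscBound_self le_rfl hk
  refine ⟨C, hC, fun s κ hs hκ t => ?_⟩
  rw [hH.slice_eq_osc (by linarith) hs hκ]
  exact h s κ hs hκ t

theorem exists_norm_slice_le_of_small (hH : Profile H) {k : ℕ} (hk : 2 ≤ k) :
    ∃ C, 0 ≤ C ∧ ∀ s κ : ℝ, |s| ≤ 1 / 64 → |κ| ≤ 5 → ∀ t,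
      ‖slice H (((k : ℝ) - 2) / 2) s κ t‖ ≤ C * (1 + |t|) ^ (-(((k : ℝ) - 2) / 2 + 1)) := by
  have hk' : (2 : ℝ) ≤ k := by exact_mod_cast hk
  obtain ⟨C, hC, h⟩ := hH.amplitude_cutoff.oscBound_succ (by norm_num) (by norm_num) hk
  refine ⟨C + C, by positivity, fun s κ hs hκ t => ?_⟩
  have hs' : |s| ≤ 1 / 10 := hs.trans (by norm_num)
  rw [hH.slice_eq_osc_cutoff (by linarith) hs hκ, add_mul]
  refine norm_add_le_of_le (h s κ hs' hκ t) ?_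
  simpa using h s κ hs' hκ (-t)

theorem exists_norm_slice_second_difference_le (hH : Profile H) {k : ℕ} (hk : 3 ≤ k) :
    ∃ C, 0 ≤ C ∧ ∀ u s : ℝ, |u| ≤ 1 → |s| ≤ 1 / 64 → ∀ t,
      ‖slice H (((k : ℝ) - 2) / 2) s (u ^ 2 - s) t +
        slice H (((k : ℝ) - 2) / 2) (-s) (u ^ 2 - -s) t -
        2 * slice H (((k : ℝ) - 2) / 2) 0 (u ^ 2 - 0) t‖ ≤
      C * s ^ 2 * (1 + |t|) ^ (1 - ((k : ℝ) - 2) / 2) := by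
  have hk' : (3 : ℝ) ≤ k := by exact_mod_cast hk
  obtain ⟨C, hC, h⟩ := hH.amplitude_cutoff.secondDiffBound (by norm_num) (by norm_num) hk
  refine ⟨C + C, by positivity, fun u s hu hs t => ?_⟩
  have hκ : ∀ {s : ℝ}, |s| ≤ 1 / 64 → |u ^ 2 - s| ≤ 5 := fun hs =>
    abs_sq_sub_le hu (hs.trans (by norm_num))
  have hs' : |-s| ≤ 1 / 64 := by rwa [abs_neg]
  have h0' : |(0 : ℝ)| ≤ 1 / 64 := by norm_num
  have hs1 : |s| < 1 / 10 := hs.trans_lt (by norm_num)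
  have hα : 0 ≤ ((k : ℝ) - 2) / 2 := by linarith
  rw [hH.slice_eq_osc_cutoff hα hs (hκ hs), hH.slice_eq_osc_cutoff hα hs' (hκ hs'),
    hH.slice_eq_osc_cutoff hα h0' (hκ h0'), add_mul, add_mul]
  have h1 := h u s hu hs1 t
  have h2 := h u s hu hs1 (-t)
  rw [abs_neg] at h2
  refine le_of_eq_of_le (congrArg norm ?_) (norm_add_le_of_le h1 h2)
  ring

theorem integrable_sheetDensity (hH : Profile H) {m : ℕ} {s : ℝ} (hs : |s| ≤ 1 / 64) :
    Integrable (fun ξ : EuclideanSpace ℝ (Fin m) => sheetDensity H s (‖ξ‖ ^ 2)) μH[(m : ℝ)] := by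
  have hs' := abs_le.1 hs
  have hd : (m : ℝ) = Module.finrank ℝ (EuclideanSpace ℝ (Fin m)) := by simp
  have hball : μH[(m : ℝ)] (Metric.closedBall (0 : EuclideanSpace ℝ (Fin m)) 1) ≠ ⊤ := by
    rw [hd]
    exact (isCompact_closedBall _ _).measure_lt_top.ne
  obtain ⟨M, hM⟩ := (isCompact_Icc (a := (1 / 16 : ℝ)) (b := 25 / 16)).exists_bound_of_continuousOn
    hH.contDiff.continuous.continuousOn
  have hmeas : Measurable fun ξ : EuclideanSpace ℝ (Fin m) => sheetDensity H s (‖ξ‖ ^ 2) := by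
    have := hH.contDiff.continuous.measurable
    unfold sheetDensity
    exact Measurable.ite (measurableSet_lt (by fun_prop) (by fun_prop)) (by fun_prop) (by fun_prop)
  refine Integrable.mono' (g := (Metric.closedBall (0 : EuclideanSpace ℝ (Fin m)) 1).indicator
    fun _ => |M| * 8) ?_ hmeas.aestronglyMeasurable (Eventually.of_forall fun ξ => ?_)
  · exact (integrable_indicator_iff measurableSet_closedBall).2 (integrableOn_const hball)
  · by_cases h0 : H (2 * ‖ξ‖ ^ 2 - s) = 0
    · simp only [sheetDensity, h0, zero_div, ite_self, norm_zero]
      exact Set.indicator_nonneg (fun _ _ => by positivity) _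
    · have h := hH.mem_of_ne_zero _ h0
      rw [Set.indicator_of_mem (by rw [mem_closedBall_zero_iff]; nlinarith [norm_nonneg ξ]),
        sheetDensity, if_pos (by linarith), norm_div, Real.norm_of_nonneg (Real.sqrt_nonneg _)]
      have h8 : 1 / 8 ≤ √(‖ξ‖ ^ 2 - s) := Real.le_sqrt_of_sq_le (by norm_num; linarith)
      rw [div_le_iff₀ (by linarith)]
      have := (hM _ h).trans (le_abs_self M)
      nlinarith [abs_nonneg M]

end Profile

end Wave

end

section

open scoped Topology NNReal ContDiff

namespace Wave

theorem norm_integral_char_mul_le_two_mul {g : ℝ → ℂ} {B : ℝ} (h : ∀ u, |u| ≤ 1 → ‖g u‖ ≤ B)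
    (h0 : ∀ u, 1 < |u| → g u = 0) (r : ℝ) : ‖∫ u, char (r * u) * g u‖ ≤ 2 * B := by
  have hB : ∫ u : ℝ, (Set.Icc (-1) 1).indicator (fun _ => B) u = 2 * B := by
    rw [integral_indicator measurableSet_Icc]
    norm_num
  rw [← hB]
  refine norm_integral_le_of_norm_le ((integrable_indicator_iff measurableSet_Icc).2
    (integrableOn_const measure_Icc_lt_top.ne)) (Eventually.of_forall fun u => ?_)
  rw [norm_mul, norm_char, one_mul]
  by_cases hu : |u| ≤ 1
  · rw [Set.indicator_of_mem (show u ∈ Set.Icc (-1 : ℝ) 1 from abs_le.1 hu)]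
    exact h u hu
  · rw [Set.indicator_of_notMem (show u ∉ Set.Icc (-1 : ℝ) 1 from fun h' => hu (abs_le.2 h')), h0 u (not_le.1 hu), norm_zero]

/-- The three bounds on `s ↦ σ̌_s(x,t)` used to estimate the kernel. -/
theorem exists_sigmaCheck_bounds {k : ℕ} (hk : 3 ≤ k) {η : Spacetime (k + 1) → ℝ}
    (hη : Continuous η) {H : ℝ → ℝ} (hH : Profile H) (hηH : ∀ z, ‖z‖ * η z = H (‖z‖ ^ 2)) :
    ∃ C, 0 ≤ C ∧ ∀ w,
      (∀ s, |s| ≤ 1 / 10 →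
        ‖sigmaCheck η s w‖ ≤ C * (1 + |timeCoord w|) ^ (-(((k : ℝ) - 2) / 2))) ∧
      (∀ s, |s| ≤ 1 / 64 →
        ‖sigmaCheck η s w‖ ≤ C * (1 + |timeCoord w|) ^ (-(((k : ℝ) - 2) / 2 + 1))) ∧
      ∀ s, |s| ≤ 1 / 64 →
        ‖sigmaCheck η s w + sigmaCheck η (-s) w - 2 * sigmaCheck η 0 w‖ ≤
          C * s ^ 2 * (1 + |timeCoord w|) ^ (1 - ((k : ℝ) - 2) / 2) := by
  have : NeZero k := ⟨by lia⟩
  obtain ⟨c, hc⟩ := sigmaCheck_eq_integral_slice (k := k)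
  obtain ⟨C₀, hC₀, h₀⟩ := hH.exists_norm_slice_le (k := k) (by lia)
  obtain ⟨C₁, hC₁, h₁⟩ := hH.exists_norm_slice_le_of_small (k := k) (by lia)
  obtain ⟨C₂, hC₂, h₂⟩ := hH.exists_norm_slice_second_difference_le hk
  set α := ((k : ℝ) - 2) / 2
  refine ⟨‖c‖ * (2 * (C₀ + C₁ + C₂)), by positivity, fun w => ?_⟩
  set T := 1 + |timeCoord w| with hT
  have hT0 : 0 < T := by positivity
  have hle : ∀ {s : ℝ}, |s| ≤ 1 / 64 → |s| ≤ 1 / 10 := fun hs => hs.trans (by norm_num)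
  have bound : ∀ s B, |s| ≤ 1 / 10 → (∀ u, |u| ≤ 1 →
      ‖slice H α s (u ^ 2 - s) (timeCoord w)‖ ≤ B) → ‖sigmaCheck η s w‖ ≤ ‖c‖ * (2 * B) := by
    intro s B hs hB
    have hB0 : 0 ≤ B := (norm_nonneg _).trans (hB 0 (by simp))
    rcases hc hη hηH s w with h | h
    · rw [h.2, norm_mul]
      gcongr
      exact norm_integral_char_mul_le_two_mul hB (fun u hu => hH.slice_eq_zero α hs hu _) _
    · rw [h.2, norm_zero]
      positivity
  refine ⟨fun s hs => ?_, fun s hs => ?_, fun s hs => ?_⟩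
  · refine (bound s _ hs fun u hu => h₀ s _ hs (abs_sq_sub_le hu hs) _).trans ?_
    rw [← mul_assoc 2, ← mul_assoc]
    gcongr
    linarith
  · refine (bound s _ (hle hs) fun u hu => h₁ s _ hs (abs_sq_sub_le hu (hle hs)) _).trans ?_
    rw [← mul_assoc 2, ← mul_assoc]
    gcongr
    linarith
  · have hs' : |-s| ≤ 1 / 64 := by rwa [abs_neg]
    have h0' : |(0 : ℝ)| ≤ 1 / 64 := by norm_num
    have hi : ∀ {s : ℝ}, |s| ≤ 1 / 64 → _ := fun {s} hs =>
      (hc hη hηH s w).resolve_right fun h => h.1 (hH.integrable_sheetDensity hs)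
    obtain ⟨i1, e1⟩ := hi hs
    obtain ⟨i2, e2⟩ := hi hs'
    obtain ⟨i3, e3⟩ := hi h0'
    have e : sigmaCheck η s w + sigmaCheck η (-s) w - 2 * sigmaCheck η 0 w =
        c * ∫ u, char (‖space w‖ * u) * (slice H α s (u ^ 2 - s) (timeCoord w) +
          slice H α (-s) (u ^ 2 - -s) (timeCoord w) -
          2 * slice H α 0 (u ^ 2 - 0) (timeCoord w)) := by
      have e4 := integral_add i1 i2
      have e5 := integral_sub (i1.add i2) (i3.const_mul 2)
      rw [integral_const_mul] at e5
      rw [e1, e2, e3]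
      simp only [Pi.add_apply] at e5
      rw [e4] at e5
      rw [mul_left_comm, ← mul_add, ← mul_sub, ← e5]
      congr 2
      ext u
      ring
    rw [e, norm_mul]
    have := norm_integral_char_mul_le_two_mul (fun u hu => h₂ u s hu hs (timeCoord w))
      (fun u hu => by
        rw [hH.slice_eq_zero α (hle hs) hu, hH.slice_eq_zero α (hle hs') hu,
          hH.slice_eq_zero α (hle h0') hu]
        simp) ‖space w‖
    calc _ ≤ ‖c‖ * (2 * (C₂ * s ^ 2 * T ^ (1 - α))) := by gcongr
      _ = ‖c‖ * (2 * C₂) * s ^ 2 * T ^ (1 - α) := by ring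
      _ ≤ _ := by
        gcongr
        linarith

/-- The truncated second-difference integral, estimated by splitting at `s ~ 1/T`. -/
theorem norm_integral_div_le {F : ℝ → ℂ} {A T α ε : ℝ} (hA : 0 ≤ A) (hT : 1 ≤ T) (hε : 0 < ε)
    (h₀ : ∀ s, |s| ≤ 1 / 10 → ‖F s‖ ≤ A * T ^ (-α))
    (h₁ : ∀ s, |s| ≤ 1 / 64 → ‖F s‖ ≤ A * T ^ (-(α + 1)))
    (h₂ : ∀ s, |s| ≤ 1 / 64 → ‖F s + F (-s) - 2 * F 0‖ ≤ A * s ^ 2 * T ^ (1 - α)) :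
    ‖∫ s in (-(1 / 10 : ℝ))..(1 / 10 : ℝ), (F s - F 0) / (((s ^ 2 + ε ^ 2 : ℝ)) : ℂ)‖ ≤
      2000 * A * T ^ (-α) := by
  have hT0 : 0 < T := one_pos.trans_le hT
  set f : ℝ → ℂ := fun s => (F s - F 0) / (((s ^ 2 + ε ^ 2 : ℝ)) : ℂ) with hf
  by_cases hi : IntervalIntegrable f volume (-(1 / 10)) (1 / 10)
  swap
  · rw [intervalIntegral.integral_undef hi, norm_zero]
    positivity
  have hsub : ∀ {a b : ℝ}, |a| ≤ 1 / 10 → |b| ≤ 1 / 10 → IntervalIntegrable f volume a b :=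
    fun ha hb => hi.mono_set (by
      rw [Set.uIcc_of_le (by norm_num : (-(1 / 10) : ℝ) ≤ 1 / 10)]
      exact Set.uIcc_subset_Icc (abs_le.1 ha) (abs_le.1 hb))
  set g : ℝ → ℂ := fun s => f s + f (-s) with hg
  have hgi : ∀ {a b : ℝ}, |a| ≤ 1 / 10 → |b| ≤ 1 / 10 → IntervalIntegrable g volume a b :=
    fun {a b} ha hb => by
      have := (hsub (a := -a) (b := -b) (by rwa [abs_neg]) (by rwa [abs_neg])).comp_sub_left 0
      simp only [zero_sub, neg_neg] at this
      exact (hsub ha hb).add this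
  have h0' : |(0 : ℝ)| ≤ 1 / 10 := by norm_num
  have h10 : |(1 / 10 : ℝ)| ≤ 1 / 10 := by norm_num
  have hfold : ∫ s in (-(1 / 10 : ℝ))..(1 / 10 : ℝ), f s = ∫ s in (0 : ℝ)..(1 / 10), g s := by
    have hn : IntervalIntegrable (fun s => f (-s)) volume 0 (1 / 10) := by
      simpa using (hsub (a := 0) (b := -(1 / 10)) h0' (by norm_num)).comp_sub_left 0
    rw [← intervalIntegral.integral_add_adjacent_intervals (b := 0)
      (hsub (by norm_num) h0') (hsub h0' h10), hg, intervalIntegral.integral_add (hsub h0' h10) hn,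
      intervalIntegral.integral_comp_neg, neg_zero, add_comm]
  have hgn : ∀ s, 0 < s → ∀ B, ‖F s + F (-s) - 2 * F 0‖ ≤ B → ‖g s‖ ≤ B / s ^ 2 := by
    intro s hs B hB
    have : g s = (F s + F (-s) - 2 * F 0) / (((s ^ 2 + ε ^ 2 : ℝ)) : ℂ) := by
      simp only [hg, hf, neg_sq]
      ring
    rw [this, norm_div, Complex.norm_real, Real.norm_of_nonneg (by positivity)]
    have hB0 : 0 ≤ B := (norm_nonneg _).trans hB
    gcongr
    nlinarith
  have htri : ∀ s B, ‖F s‖ ≤ B → ‖F (-s)‖ ≤ B → ‖F 0‖ ≤ B →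
      ‖F s + F (-s) - 2 * F 0‖ ≤ 4 * B := by
    intro s B h1 h2 h3
    refine (norm_sub_le_of_le (norm_add_le_of_le h1 h2) (r₂ := 2 * B) ?_).trans_eq (by ring)
    rw [norm_mul, Complex.norm_ofNat]
    gcongr
  set d : ℝ := 1 / 64 / T with hd
  have hd0 : 0 < d := by positivity
  have hd1 : d ≤ 1 / 64 := div_le_self (by norm_num) hT
  have hdabs : |d| ≤ 1 / 10 := by rw [abs_of_pos hd0]; linarith
  have h64 : |(1 / 64 : ℝ)| ≤ 1 / 10 := by rw [abs_of_pos (by norm_num)]; norm_num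
  have p1 : ‖∫ s in (0 : ℝ)..d, g s‖ ≤ A * T ^ (-α) := by
    have := intervalIntegral.norm_integral_le_of_norm_le_const (f := g) (a := 0) (b := d)
      (C := A * T ^ (1 - α)) fun s hs => by
        rw [Set.uIoc_of_le hd0.le] at hs
        refine (hgn s hs.1 _ (h₂ s ?_)).trans_eq ?_
        · rw [abs_of_pos hs.1]
          exact hs.2.trans hd1
        · have := hs.1.ne'
          field_simp
    refine this.trans ?_
    rw [sub_zero, abs_of_pos hd0, hd, sub_eq_neg_add, Real.rpow_add_one hT0.ne']
    have : 0 ≤ A * T ^ (-α) := by positivity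
    calc A * (T ^ (-α) * T) * (1 / 64 / T) = A * T ^ (-α) / 64 := by field_simp
      _ ≤ _ := by linarith
  have p2 : ‖∫ s in d..(1 / 64), g s‖ ≤ 256 * (A * T ^ (-α)) := by
    have hnot : (0 : ℝ) ∉ Set.uIcc d (1 / 64) := by
      rw [Set.uIcc_of_le hd1]
      exact fun h => hd0.not_ge h.1
    have hint : IntervalIntegrable (fun s : ℝ => 4 * (A * T ^ (-(α + 1))) * s ^ (-2 : ℤ)) volume d
        (1 / 64) := (intervalIntegral.intervalIntegrable_zpow (Or.inr hnot)).const_mul _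
    refine (intervalIntegral.norm_integral_le_of_norm_le hd1
      (Eventually.of_forall fun s hs => ?_) hint).trans ?_
    · have hs0 : 0 < s := hd0.trans hs.1
      have hs1 : |s| ≤ 1 / 64 := by rw [abs_of_pos hs0]; exact hs.2
      refine (hgn s hs0 _ (htri s _ (h₁ s hs1) (h₁ (-s) (by rwa [abs_neg]))
        (h₁ 0 (by norm_num)))).trans_eq ?_
      rw [zpow_neg, div_eq_mul_inv]
      rfl
    · rw [intervalIntegral.integral_const_mul, integral_zpow (Or.inr ⟨by norm_num, hnot⟩),
        neg_add, Real.rpow_add hT0, Real.rpow_neg_one]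
      have e : ((1 / 64 : ℝ) ^ (-2 + 1 : ℤ) - d ^ (-2 + 1 : ℤ)) / (((-2 : ℤ) : ℝ) + 1) ≤ 64 * T := by
        rw [show (-2 + 1 : ℤ) = -1 by norm_num, zpow_neg_one, zpow_neg_one, hd]
        have : (1 / 64 / T)⁻¹ = 64 * T := by field_simp
        rw [this]
        norm_num
        linarith
      calc _ ≤ 4 * (A * (T ^ (-α) * T⁻¹)) * (64 * T) := by gcongr
        _ = _ := by field_simp; ring
  have p3 : ‖∫ s in (1 / 64 : ℝ)..(1 / 10), g s‖ ≤ 1700 * (A * T ^ (-α)) := by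
    have := intervalIntegral.norm_integral_le_of_norm_le_const (f := g) (a := 1 / 64) (b := 1 / 10)
      (C := 4 * (A * T ^ (-α)) * 64 ^ 2) fun s hs => by
        rw [Set.uIoc_of_le (by norm_num)] at hs
        have hs0 : 0 < s := lt_trans (by norm_num) hs.1
        have hs1 : |s| ≤ 1 / 10 := by rw [abs_of_pos hs0]; exact hs.2
        refine (hgn s hs0 _ (htri s _ (h₀ s hs1) (h₀ (-s) (by rwa [abs_neg]))
          (h₀ 0 (by norm_num)))).trans ?_
        rw [div_eq_mul_inv]
        gcongr
        rw [← inv_pow]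
        gcongr
        rw [inv_le_comm₀ hs0 (by norm_num)]
        linarith [hs.1]
    refine this.trans ?_
    rw [abs_of_pos (by norm_num)]
    have : 0 ≤ A * T ^ (-α) := by positivity
    linarith
  rw [hfold, ← intervalIntegral.integral_add_adjacent_intervals (hgi h0' h64) (hgi h64 h10),
    ← intervalIntegral.integral_add_adjacent_intervals (hgi h0' hdabs) (hgi hdabs h64)]
  refine (norm_add_le_of_le (norm_add_le_of_le p1 p2) p3).trans ?_
  have : 0 ≤ A * T ^ (-α) := by positivity
  linarith

end Wave

end

/-- For `n ≥ 5`, `δ = 1/10`, and any smooth radial bump function `η`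
supported on `{1/4 ≤ ‖z‖ ≤ 5/4}`, there is a constant `C > 0` (depending only on `n` and
`η`, independent of `ε` and `x`) such that for every `ε > 0` and every `(x,t)`,
`|K₀^ε(x,t)| ≤ C (1+|t|)^{(2-n)/2 + 1}`. -/
theorem statement10 (n m : ℕ) (hn : 5 ≤ n) (hnm : m + 1 = n)
    (η : Spacetime m → ℝ)
    (hηsm : ContDiff ℝ (⊤ : ℕ∞) η)
    (hηrad : ∀ z z' : Spacetime m, ‖z‖ = ‖z'‖ → η z = η z')
    (hηsupp : ∀ z : Spacetime m, η z ≠ 0 → 1 / 4 ≤ ‖z‖ ∧ ‖z‖ ≤ 5 / 4) :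
    ∃ C : ℝ, 0 < C ∧ ∀ ε : ℝ, 0 < ε → ∀ w : Spacetime m,
      ‖Kzero η ε w‖ ≤ C * (1 + |timeCoord w|) ^ (((2 : ℝ) - n) / 2 + 1) := by
  obtain ⟨k, rfl⟩ : ∃ k, m = k + 1 := ⟨m - 1, by lia⟩
  obtain ⟨H, hH, hηH⟩ := exists_profile hηsm hηrad hηsupp
  obtain ⟨A, hA, h⟩ := exists_sigmaCheck_bounds (k := k) (by lia) hηsm.continuous hH hηH
  refine ⟨2000 * A + 1, by positivity, fun ε hε w => ?_⟩
  obtain ⟨h₀, h₁, h₂⟩ := h w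
  have hexp : ((2 : ℝ) - n) / 2 + 1 = -(((k : ℝ) - 2) / 2) := by
    rw [← hnm]; push_cast; ring
  rw [hexp]
  refine (norm_integral_div_le hA (by linarith [abs_nonneg (timeCoord w)]) hε h₀ h₁ h₂).trans ?_
  gcongr
  linarith
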